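/- Let θ be a cylindric diagram in C_ω and let [e, w_θ) denote [e, w_{θ,T}) for any standard tableau T ∈ LE(θ) (this set is independent of T). Then: (1) the map Φ : (I(θ), ⊆) → ([e, w_θ), ⪯) given by Φ(ξ) = w_ξ is an order isomorphism; (2) the map Ψ : ([e, w_θ), ⪯) → (I(R(w_θ)), ⊆) given by Ψ(w) = R(w) is an order isomorphism, where I(R(w_θ)) is the set of proper order ideals of the poset (R(w_θ), ⊴), ordered by inclusion. -/

import Mathlib

/-!
The proof identifies the affine Weyl group with a group of affine permutations of `ℤ`. Writing
`rt p q` for the root `ε_p - ε_q` (`rt n (n + 1)` being the simple root of index `n` mod `κ`), the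
product of a word `L` sends `rt p q` to `rt (perm L p) (perm L q)`, where `perm L` is the product
of the corresponding affine transpositions (`wordProd_rt`). Hence `rt p q` is an inversion exactly
when `p < q` and the inverse permutation reverses `p` and `q` (`rt_mem_invSet`), right
multiplication by `s_n` increases the length exactly when `perm L n < perm L (n + 1)`
(`len_ascent`, `ascent_of_len`), such an ascent adds one inversion (`invSet_concat`), and an
element is determined by its inversions (`eq_of_invSet`).

The boundary of a cylindric diagram `θ` is a periodic lattice path whose steps are indexed by `ℤ`;
each step is the end of a column (`IsCol`) or of a row (`IsRow`), and the hook of the cell in row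
`a` and column `b` is `rt p q`, with `p` the edge of the column and `q` the edge of the row
(`hk_cell`). Removing a minimal cell of content `n` swaps the boundary steps `n` and `n + 1`
(`col_step`, `row_step`). So when an ideal `ξ` is built up one minimal cell at a time, each cell is
an ascent of the weak order, and the inversion it adds is its hook in `θ`; therefore
`R(w_ξ) = hk '' ξ` (`Good.invSet`). Every finite ideal arises in this way, also starting from any
smaller one (`Good.extend`), and proper ideals are finite (`ideal_finite`).

Conversely, if all inversions of `v` are hooks of `θ`, then the inverse permutation of `v` keeps
the column edges in order, and likewise the row edges, because a root joining two edges of the same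
kind is never a hook (`not_hook`). Hence the cells whose hooks are inversions of `v` form an ideal,
and `v` is its element (`good_of_invSet`).

Finally `Π_θ` consists of the roots joining consecutive column edges or consecutive row edges, and
`hk` is an order embedding of `θ` into `(R(w_θ), ⊴)`: one direction telescopes (`trile_of_cle`),
the other evaluates a suitable linear functional (`cle_of_trile`). In particular `hk` is injective
on `θ`, and all the assertions reduce to statements about finite ideals of `θ`.
-/

namespace CylPaper

/-! ## The cylinder and its order -/

abbrev Z2 : Type := ℤ × ℤ

/-- The partial order on ℤ²: (a,b) ≤ (c,d) iff a ≥ c and b ≥ d. -/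
def le2 (x y : Z2) : Prop := y.1 ≤ x.1 ∧ y.2 ≤ x.2

/-- The period ω = (m, -ℓ). -/
def om (m l : ℕ) : Z2 := ((m : ℤ), -(l : ℤ))

/-- The cylinder C_ω = ℤ²/ℤω. -/
abbrev Cyl (m l : ℕ) : Type := Z2 ⧸ AddSubgroup.zmultiples (om m l)

/-- The natural projection π : ℤ² → C_ω. -/
def pr (m l : ℕ) : Z2 →+ Cyl m l := QuotientAddGroup.mk' _

/-- The induced order relation on the cylinder: x ≤ y iff there are lifts with x̃ ≤ ỹ. -/
def cle (m l : ℕ) (x y : Cyl m l) : Prop :=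
  ∃ a b : Z2, pr m l a = x ∧ pr m l b = y ∧ le2 a b

/-- A cylindric diagram: a non-trivial order filter of C_ω. -/
def IsCylindric (m l : ℕ) (θ : Set (Cyl m l)) : Prop :=
  θ.Nonempty ∧ θ ≠ Set.univ ∧ ∀ x ∈ θ, ∀ y, cle m l x y → y ∈ θ

/-- A periodic diagram of period ω: a non-trivial order filter of ℤ² with Θ + ω = Θ. -/
def IsPeriodic (m l : ℕ) (Θ : Set Z2) : Prop :=
  Θ.Nonempty ∧ Θ ≠ Set.univ ∧ (∀ x ∈ Θ, ∀ y, le2 x y → y ∈ Θ) ∧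
    (fun p => p + om m l) '' Θ = Θ

/-- A proper order ideal ξ of the sub-poset θ of C_ω. -/
def IsProperIdealOf (m l : ℕ) (θ ξ : Set (Cyl m l)) : Prop :=
  ξ ⊆ θ ∧ ξ ≠ θ ∧ ∀ x ∈ ξ, ∀ y ∈ θ, cle m l y x → y ∈ ξ

/-- A proper order ideal of the whole cylinder C_ω. -/
def IsProperIdealC (m l : ℕ) (J : Set (Cyl m l)) : Prop :=
  J ≠ Set.univ ∧ ∀ x ∈ J, ∀ y, cle m l y x → y ∈ J

/-- A proper order filter of the whole cylinder C_ω. -/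
def IsProperFilterC (m l : ℕ) (J : Set (Cyl m l)) : Prop :=
  J ≠ Set.univ ∧ ∀ x ∈ J, ∀ y, cle m l x y → y ∈ J

/-! ## The content map -/

/-- The content on ℤ²: (a,b) ↦ b - a mod κ (κ = m + ℓ). -/
def conHom (m l : ℕ) : Z2 →+ ZMod (m + l) where
  toFun p := ((p.2 - p.1 : ℤ) : ZMod (m + l))
  map_zero' := by simp
  map_add' a b := by
    simp only [Prod.fst_add, Prod.snd_add]
    push_cast
    ring

lemma conHom_om (m l : ℕ) : conHom m l (om m l) = 0 := by
  have h : ((m + l : ℕ) : ZMod (m + l)) = 0 := ZMod.natCast_self _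
  show ((((om m l).2 - (om m l).1 : ℤ)) : ZMod (m + l)) = 0
  simp only [om]
  push_cast at h ⊢
  linear_combination -h

/-- The content map con : C_ω → ℤ/κℤ. -/
def con (m l : ℕ) : Cyl m l →+ ZMod (m + l) :=
  QuotientAddGroup.lift _ (conHom m l) (by
    intro x hx
    obtain ⟨k, rfl⟩ := AddSubgroup.mem_zmultiples_iff.mp hx
    simp only [AddMonoidHom.mem_ker, map_zsmul, conHom_om, smul_zero])

/-! ## The affine root system of type A_{κ-1}^{(1)} -/

/-- h*, with coordinates in the basis {α_i (i ∈ ℤ/κℤ), Λ₀}: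
`(c, t)` stands for `Σ_i c_i α_i + t Λ₀`. -/
abbrev Hw (κ : ℕ) : Type := (ZMod κ → ℚ) × ℚ

/-- The affine Cartan matrix of type A_{κ-1}^{(1)} (valid for κ ≥ 2). -/
def cartan (κ : ℕ) (i j : ZMod κ) : ℚ :=
  (if i = j then 2 else 0) + (if i - j = 1 then -1 else 0) + (if i - j = -1 then -1 else 0)

/-- The simple root α_i. -/
def alphaR (κ : ℕ) (i : ZMod κ) : Hw κ := (Pi.single i 1, 0)

/-- The null root δ = Σ_i α_i. -/
def deltaR (κ : ℕ) : Hw κ := (fun _ => 1, 0)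

/-- The pairing ⟨ζ, α_i^∨⟩. -/
noncomputable def pairSimple (κ : ℕ) (ζ : Hw κ) (i : ZMod κ) : ℚ :=
  (∑ᶠ j, ζ.1 j * cartan κ i j) + ζ.2 * (if i = 0 then 1 else 0)

/-- The pairing ⟨ζ, β^∨⟩ where β = Σ_i k_i α_i lies in the root lattice,
so β^∨ = Σ_i k_i α_i^∨. -/
noncomputable def pairCo (κ : ℕ) (ζ β : Hw κ) : ℚ := ∑ᶠ i, β.1 i * pairSimple κ ζ i

/-- The simple reflection s_i : ζ ↦ ζ - ⟨ζ, α_i^∨⟩ α_i, as a map on h*. -/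
noncomputable def sFun (κ : ℕ) (i : ZMod κ) (ζ : Hw κ) : Hw κ :=
  ζ - pairSimple κ ζ i • alphaR κ i

/-- The element s_{i₁} s_{i₂} ⋯ s_{i_r} of the affine Weyl group
given by a word [i₁, i₂, …, i_r]. -/
noncomputable def wordProd (κ : ℕ) (L : List (ZMod κ)) : Hw κ → Hw κ :=
  (L.map (sFun κ)).foldr (· ∘ ·) id

/-- Membership in the affine Weyl group W (generated by the s_i). -/
def Wmem (κ : ℕ) (w : Hw κ → Hw κ) : Prop := ∃ L : List (ZMod κ), wordProd κ L = w

/-- The Coxeter length: the least r such that w is a product of r simple reflections. -/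
noncomputable def len (κ : ℕ) (w : Hw κ → Hw κ) : ℕ :=
  sInf {r : ℕ | ∃ L : List (ZMod κ), L.length = r ∧ wordProd κ L = w}

/-- Q₊ = Σ_i ℤ≥0 α_i. -/
def QPos (κ : ℕ) : Set (Hw κ) := {x | x.2 = 0 ∧ ∀ i, ∃ n : ℕ, x.1 i = (n : ℚ)}

/-- The set R = WΠ of real roots. -/
def Rset (κ : ℕ) : Set (Hw κ) :=
  {β | ∃ (L : List (ZMod κ)) (i : ZMod κ), β = wordProd κ L (alphaR κ i)}

/-- Positive real roots R₊ = R ∩ Q₊. -/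
def Rpos (κ : ℕ) : Set (Hw κ) := Rset κ ∩ QPos κ

/-- Negative real roots R₋ = -R₊. -/
def Rneg (κ : ℕ) : Set (Hw κ) := {β | -β ∈ Rpos κ}

/-- The inversion set R(w) = R₊ ∩ w R₋. -/
def invSet (κ : ℕ) (w : Hw κ → Hw κ) : Set (Hw κ) := Rpos κ ∩ (w '' Rneg κ)

/-- The weak right Bruhat order on W. -/
def wble (κ : ℕ) (v w : Hw κ → Hw κ) : Prop :=
  Relation.ReflTransGen
    (fun u u' => ∃ i : ZMod κ, u' = u ∘ sFun κ i ∧ len κ u' = len κ u + 1) v w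

/-- The weak Bruhat interval [e, w]. -/
def bint (κ : ℕ) (w : Hw κ → Hw κ) : Set (Hw κ → Hw κ) :=
  {x | wble κ id x ∧ wble κ x w}

/-- A single commutation move on words: swap adjacent letters i, j with i - j ≠ 0, ±1. -/
def CommMove (κ : ℕ) (L1 L2 : List (ZMod κ)) : Prop :=
  ∃ (u v : List (ZMod κ)) (i j : ZMod κ),
    i - j ≠ 0 ∧ i - j ≠ 1 ∧ i - j ≠ -1 ∧
    L1 = u ++ i :: j :: v ∧ L2 = u ++ j :: i :: v

/-- A word is reduced if its length equals the Coxeter length of its product. -/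
def IsReducedWord (κ : ℕ) (L : List (ZMod κ)) : Prop :=
  len κ (wordProd κ L) = L.length

/-- Fully commutative: any reduced word for w can be obtained from any other
using only commutation moves. -/
def FullyComm (κ : ℕ) (w : Hw κ → Hw κ) : Prop :=
  ∀ L1 L2 : List (ZMod κ),
    IsReducedWord κ L1 → wordProd κ L1 = w →
    IsReducedWord κ L2 → wordProd κ L2 = w →
    Relation.ReflTransGen (CommMove κ) L1 L2

/-! ## Hooks, bottom set and weights attached to a cylindric diagram -/

/-- α(x) = α_{con(x)}. -/
def alC (m l : ℕ) (x : Cyl m l) : Hw (m + l) := alphaR (m + l) (con m l x)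

/-- arm(x) = {x + π(0,k) : k ≥ 1} ∩ θ. -/
def armSet (m l : ℕ) (θ : Set (Cyl m l)) (x : Cyl m l) : Set (Cyl m l) :=
  {y | y ∈ θ ∧ ∃ k : ℕ, 1 ≤ k ∧ y = x + pr m l (0, (k : ℤ))}

/-- leg(x) = {x + π(k,0) : k ≥ 1} ∩ θ. -/
def legSet (m l : ℕ) (θ : Set (Cyl m l)) (x : Cyl m l) : Set (Cyl m l) :=
  {y | y ∈ θ ∧ ∃ k : ℕ, 1 ≤ k ∧ y = x + pr m l ((k : ℤ), 0)}

/-- The colored hook length hk(x) = α(x) + Σ_{y∈arm(x)} α(y) + Σ_{y∈leg(x)} α(y). -/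
noncomputable def hk (m l : ℕ) (θ : Set (Cyl m l)) (x : Cyl m l) : Hw (m + l) :=
  alC m l x + (∑ᶠ y ∈ armSet m l θ x, alC m l y) + (∑ᶠ y ∈ legSet m l θ x, alC m l y)

/-- x is the minimum cell b_i of content i in θ. -/
def IsBottomCell (m l : ℕ) (θ : Set (Cyl m l)) (i : ZMod (m + l)) (x : Cyl m l) : Prop :=
  x ∈ θ ∧ con m l x = i ∧ ∀ y ∈ θ, con m l y = i → cle m l x y

/-- The bottom set Γ = {b_i : i ∈ ℤ/κℤ}. -/
def btm (m l : ℕ) (θ : Set (Cyl m l)) : Set (Cyl m l) :=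
  {x | ∃ i, IsBottomCell m l θ i x}

/-- The maximal elements Γ_max of the bottom set. -/
def btmMax (m l : ℕ) (θ : Set (Cyl m l)) : Set (Cyl m l) :=
  {x | x ∈ btm m l θ ∧ ∀ y ∈ btm m l θ, cle m l x y → y = x}

/-- The minimal elements Γ_min of the bottom set. -/
def btmMin (m l : ℕ) (θ : Set (Cyl m l)) : Set (Cyl m l) :=
  {x | x ∈ btm m l θ ∧ ∀ y ∈ btm m l θ, cle m l y x → y = x}

open Classical in
/-- The coefficient a_i of Λ_i in the predominant weight P_θ:
1 if b_i ∈ Γ_max, -1 if b_i ∈ Γ_min, 0 otherwise. -/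
noncomputable def aC (m l : ℕ) (θ : Set (Cyl m l)) (i : ZMod (m + l)) : ℚ :=
  if ∃ x, IsBottomCell m l θ i x ∧ x ∈ btmMax m l θ then 1
  else if ∃ x, IsBottomCell m l θ i x ∧ x ∈ btmMin m l θ then -1 else 0

/-- The pairing ⟨P_θ, β^∨⟩ = Σ_i a_i k_i for β = Σ_i k_i α_i,
where P_θ = Σ_i a_i Λ_i (since ⟨Λ_i, α_j^∨⟩ = δ_{ij} and ⟨Λ_i, d⟩ = 0). -/
noncomputable def pairP (m l : ℕ) (θ : Set (Cyl m l)) (β : Hw (m + l)) : ℚ :=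
  ∑ᶠ i, aC m l θ i * β.1 i

/-- D(P_θ) = {α ∈ R₊ : ⟨P_θ, α^∨⟩ = -1}. -/
def DSet (m l : ℕ) (θ : Set (Cyl m l)) : Set (Hw (m + l)) :=
  {β | β ∈ Rpos (m + l) ∧ pairP m l θ β = -1}

/-- The "inversion set" R(w_θ) = {hk(x) : x ∈ θ}. -/
def RwTheta (m l : ℕ) (θ : Set (Cyl m l)) : Set (Hw (m + l)) := hk m l θ '' θ

/-- The set Π_θ = Π_θ^0 ∪ Π_θ^arm ∪ Π_θ^leg. -/
def PiTheta (m l : ℕ) (θ : Set (Cyl m l)) : Set (Hw (m + l)) :=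
  {v | ∃ x, x ∈ btm m l θ ∧ x ∉ btmMax m l θ ∧ x ∉ btmMin m l θ ∧ v = alC m l x} ∪
  {v | ∃ x, x ∈ btmMax m l θ ∧ v = alC m l x + ∑ᶠ y ∈ armSet m l θ x, alC m l y} ∪
  {v | ∃ x, x ∈ btmMax m l θ ∧ v = alC m l x + ∑ᶠ y ∈ legSet m l θ x, alC m l y}

/-- The modified order ⊴ on R(w_θ): α ⊴ β iff β - α ∈ Σ_{γ∈Π_θ} ℤ≥0 γ. -/
def trile (m l : ℕ) (θ : Set (Cyl m l)) (α β : Hw (m + l)) : Prop :=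
  β - α ∈ AddSubmonoid.closure (PiTheta m l θ)

/-! ## Standard tableaux (encoded by the inverse enumeration e = T⁻¹ : ℤ≥1 → θ) -/

/-- A standard tableau on θ, given by the enumeration e = T⁻¹ : {1,2,…} → θ.
This is precisely the data of an order-preserving bijection T : θ → ℤ≥1. -/
def IsTableau (m l : ℕ) (θ : Set (Cyl m l)) (e : ℕ → Cyl m l) : Prop :=
  Set.InjOn e {a : ℕ | 1 ≤ a} ∧ e '' {a : ℕ | 1 ≤ a} = θ ∧
  ∀ a b : ℕ, 1 ≤ a → 1 ≤ b → cle m l (e a) (e b) → e a ≠ e b → a < b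

/-- A standard tableau on a finite (skew) diagram ξ with |ξ| = n, encoded by
the enumeration e = S⁻¹ : {1,…,n} → ξ. -/
def IsTableauOn (m l : ℕ) (ξ : Set (Cyl m l)) (n : ℕ) (e : ℕ → Cyl m l) : Prop :=
  Set.InjOn e (Set.Icc 1 n) ∧ e '' Set.Icc 1 n = ξ ∧
  ∀ a b : ℕ, a ∈ Set.Icc 1 n → b ∈ Set.Icc 1 n → cle m l (e a) (e b) → e a ≠ e b → a < b

/-- The word (con(e 1), con(e 2), …, con(e n)). -/
def tabWord (m l : ℕ) (e : ℕ → Cyl m l) (n : ℕ) : List (ZMod (m + l)) :=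
  (List.range n).map (fun k => con m l (e (k + 1)))

/-- The semi-infinite Bruhat interval [e, w_{θ,T}) = ⋃_{n≥1} [e, w_{θ,T}[n]]. -/
def semiInt (m l : ℕ) (e : ℕ → Cyl m l) : Set (Hw (m + l) → Hw (m + l)) :=
  ⋃ n ∈ {n : ℕ | 1 ≤ n}, bint (m + l) (wordProd (m + l) (tabWord m l e n))

/-- w is P_θ-pluscule: ⟨P_θ, α^∨⟩ = -1 for every α ∈ R(w). -/
def Pluscule (m l : ℕ) (θ : Set (Cyl m l)) (w : Hw (m + l) → Hw (m + l)) : Prop :=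
  ∀ β ∈ invSet (m + l) w, pairP m l θ β = -1

/-- The generating relation of the heap order ⪯_T on ℤ≥1. -/
def heapRel (m l : ℕ) (e : ℕ → Cyl m l) (a b : ℕ) : Prop :=
  1 ≤ a ∧ a ≤ b ∧
    (con m l (e a) = con m l (e b) ∨
      sFun (m + l) (con m l (e a)) ∘ sFun (m + l) (con m l (e b)) ≠
        sFun (m + l) (con m l (e b)) ∘ sFun (m + l) (con m l (e a)))

/-- The generating relation of the heap order ≤^hp on R(w_θ):
α ≤ β whenever β - α ∈ Q₊ (the ordinary order) and ⟨α, β^∨⟩ ≠ 0. -/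
def hpRel (m l : ℕ) (θ : Set (Cyl m l)) (α β : Hw (m + l)) : Prop :=
  α ∈ RwTheta m l θ ∧ β ∈ RwTheta m l θ ∧ β - α ∈ QPos (m + l) ∧
    pairCo (m + l) α β ≠ 0

/-- v is the Weyl group element w_ξ of a proper order ideal ξ of θ. -/
def IsIdealWord (m l : ℕ) (θ ξ : Set (Cyl m l)) (v : Hw (m + l) → Hw (m + l)) : Prop :=
  IsProperIdealOf m l θ ξ ∧
    ∃ n e, IsTableauOn m l ξ n e ∧ v = wordProd (m + l) (tabWord m l e n)

/-- A proper order ideal of the poset (R(w_θ), ⊴). -/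
def IsProperIdealOfRw (m l : ℕ) (θ : Set (Cyl m l)) (J : Set (Hw (m + l))) : Prop :=
  J ⊆ RwTheta m l θ ∧ J ≠ RwTheta m l θ ∧
    ∀ β ∈ J, ∀ α ∈ RwTheta m l θ, trile m l θ α β → α ∈ J

/-! ### Root potentials and affine permutations -/

set_option linter.unusedSectionVars false

section Roots

variable {κ : ℕ} [NeZero κ]

/-- A potential for the simple roots: `Epot (n + 1) - Epot n = α_n`. The coefficient of `α_i` in
`Epot n` counts, with sign, the integers congruent to `i` between `0` and `n`. -/
def Epot (κ : ℕ) (n : ℤ) : Hw κ :=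
  (fun i => ((-(((i.val : ℤ) - n) / (κ : ℤ)) : ℤ) : ℚ), 0)

lemma kpos : (0 : ℤ) < (κ : ℤ) := by
  have := NeZero.pos κ
  exact_mod_cast this

lemma Epot_succ (n : ℤ) : Epot κ (n + 1) = Epot κ n + alphaR κ (n : ZMod κ) := by
  have hk := kpos (κ := κ)
  refine Prod.ext (funext fun i => ?_) (by simp [Epot, alphaR])
  simp only [Epot, alphaR, Prod.fst_add, Pi.add_apply, Pi.single_apply]
  have hi : (((i.val : ℤ)) : ZMod κ) = i := by simp
  have key : (i = (n : ZMod κ)) ↔ (κ : ℤ) ∣ ((i.val : ℤ) - n) := by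
    rw [← ZMod.intCast_zmod_eq_zero_iff_dvd, Int.cast_sub, hi, sub_eq_zero]
  set v : ℤ := (i.val : ℤ)
  by_cases h : i = (n : ZMod κ)
  · rw [if_pos h]
    obtain ⟨c, hc⟩ := key.1 h
    rw [hc, show v - (n + 1) = -1 + κ * c by linarith, Int.add_mul_ediv_left _ _ hk.ne',
      Int.mul_ediv_cancel_left _ hk.ne', Int.ediv_eq_neg_one_of_neg_of_le (by norm_num) (by omega)]
    push_cast; ring
  · rw [if_neg h, add_zero]
    have h1 : (v - n) % κ ≠ 0 := fun h2 => h (key.2 (Int.dvd_of_emod_eq_zero h2))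
    have h2 := Int.emod_nonneg (v - n) hk.ne'
    have h3 := Int.emod_lt_of_pos (v - n) hk
    have h4 := Int.mul_ediv_add_emod (v - n) κ
    have : (v - (n + 1)) / (κ : ℤ) = (v - n) / κ := by
      rw [show v - (n + 1) = ((v - n) % κ - 1) + κ * ((v - n) / κ) by linarith,
        Int.add_mul_ediv_left _ _ hk.ne', Int.ediv_eq_zero_of_lt (by omega) (by omega), zero_add]
    rw [this]

lemma cartan_symm (i j : ZMod κ) : cartan κ i j = cartan κ j i := by
  unfold cartan
  have h1 : (i = j) ↔ (j = i) := eq_comm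
  have h2 : (i - j = 1) ↔ (j - i = -1) := by
    constructor <;> intro h <;> linear_combination -h
  have h3 : (i - j = -1) ↔ (j - i = 1) := by
    constructor <;> intro h <;> linear_combination -h
  simp only [h1, h2, h3]
  ring

lemma pairSimple_eq (ζ : Hw κ) (i : ZMod κ) :
    pairSimple κ ζ i = (∑ j, ζ.1 j * cartan κ i j) + ζ.2 * (if i = 0 then 1 else 0) := by
  rw [pairSimple, finsum_eq_sum_of_fintype]

lemma pairSimple_sub_smul (ζ η : Hw κ) (c : ℚ) (i : ZMod κ) :
    pairSimple κ (ζ - c • η) i = pairSimple κ ζ i - c * pairSimple κ η i := by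
  simp only [pairSimple_eq, Prod.fst_sub, Prod.snd_sub, Prod.smul_fst, Prod.smul_snd, Pi.sub_apply,
    Pi.smul_apply, smul_eq_mul, sub_mul, Finset.sum_sub_distrib, mul_add, Finset.mul_sum, mul_assoc]
  ring

lemma pairSimple_add (ζ η : Hw κ) (i : ZMod κ) :
    pairSimple κ (ζ + η) i = pairSimple κ ζ i + pairSimple κ η i := by
  have := pairSimple_sub_smul ζ η (-1) i
  simpa using this

lemma pairSimple_alpha (j i : ZMod κ) : pairSimple κ (alphaR κ j) i = cartan κ i j := by
  simp [pairSimple_eq, alphaR, Pi.single_apply]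

/-- The invariant symmetric form on `h*`. -/
noncomputable def bil (ζ η : Hw κ) : ℚ := (∑ i, η.1 i * pairSimple κ ζ i) + η.2 * ζ.1 0

lemma bil_symm (ζ η : Hw κ) : bil ζ η = bil η ζ := by
  simp only [bil, pairSimple_eq, mul_add, Finset.sum_add_distrib, Finset.mul_sum]
  rw [Finset.sum_comm]
  simp only [mul_ite, mul_one, mul_zero, Finset.sum_ite_eq', Finset.mem_univ, if_true]
  have : (∑ y, ∑ x, η.1 x * (ζ.1 y * cartan κ x y)) = ∑ y, ∑ x, ζ.1 y * (η.1 x * cartan κ y x) := by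
    refine Finset.sum_congr rfl fun y _ => Finset.sum_congr rfl fun x _ => ?_
    rw [cartan_symm]; ring
  rw [this]; ring

lemma bil_alpha (ζ : Hw κ) (i : ZMod κ) : bil ζ (alphaR κ i) = pairSimple κ ζ i := by
  simp [bil, alphaR, Pi.single_apply]

lemma bil_sub_smul (ζ η ν : Hw κ) (c : ℚ) : bil (ζ - c • η) ν = bil ζ ν - c * bil η ν := by
  simp only [bil, pairSimple_sub_smul, Prod.fst_sub, Prod.smul_fst, Pi.sub_apply,
    Pi.smul_apply, smul_eq_mul, mul_sub, Finset.sum_sub_distrib, mul_add, Finset.mul_sum]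
  have : (∑ x, ν.1 x * (c * pairSimple κ η x)) = ∑ x, c * (ν.1 x * pairSimple κ η x) :=
    Finset.sum_congr rfl fun x _ => by ring
  rw [this]; ring

lemma bil_alpha_left (ζ : Hw κ) (i : ZMod κ) : bil (alphaR κ i) ζ = pairSimple κ ζ i := by
  rw [bil_symm, bil_alpha]

lemma cartan_self (hκ : 1 < κ) (i : ZMod κ) : cartan κ i i = 2 := by
  have : Fact (1 < κ) := ⟨hκ⟩
  simp [cartan]

lemma bil_sFun (hκ : 1 < κ) (i : ZMod κ) (ζ η : Hw κ) :
    bil (sFun κ i ζ) (sFun κ i η) = bil ζ η := by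
  simp only [sFun, bil_sub_smul, bil_symm _ (η - _), bil_alpha_left, pairSimple_sub_smul,
    pairSimple_alpha, cartan_self hκ]
  rw [bil_symm η, bil_sub_smul, bil_alpha_left]
  ring

lemma sFun_sub_smul (i : ZMod κ) (ζ η : Hw κ) (c : ℚ) :
    sFun κ i (ζ - c • η) = sFun κ i ζ - c • sFun κ i η := by
  simp only [sFun, pairSimple_sub_smul, smul_sub, sub_smul, mul_smul]
  abel

lemma sFun_sFun (hκ : 1 < κ) (i : ZMod κ) (ζ : Hw κ) : sFun κ i (sFun κ i ζ) = ζ := by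
  simp only [sFun, pairSimple_sub_smul, pairSimple_alpha, cartan_self hκ]
  module

lemma sFun_comp (hκ : 1 < κ) (i : ZMod κ) : sFun κ i ∘ sFun κ i = id :=
  funext fun ζ => sFun_sFun hκ i ζ

lemma wordProd_nil : wordProd κ [] = id := rfl

lemma wordProd_cons (i : ZMod κ) (L : List (ZMod κ)) :
    wordProd κ (i :: L) = sFun κ i ∘ wordProd κ L := rfl

lemma wordProd_append (L M : List (ZMod κ)) :
    wordProd κ (L ++ M) = wordProd κ L ∘ wordProd κ M := by
  induction L with
  | nil => rfl
  | cons i L ih => rw [List.cons_append, wordProd_cons, wordProd_cons, ih]; rfl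

lemma wordProd_concat (L : List (ZMod κ)) (i : ZMod κ) :
    wordProd κ (L ++ [i]) = wordProd κ L ∘ sFun κ i := wordProd_append L [i]

lemma wordProd_sub_smul (L : List (ZMod κ)) (ζ η : Hw κ) (c : ℚ) :
    wordProd κ L (ζ - c • η) = wordProd κ L ζ - c • wordProd κ L η := by
  induction L with
  | nil => rfl
  | cons i L ih => simp only [wordProd_cons, Function.comp_apply, ih, sFun_sub_smul]

lemma wordProd_sub (L : List (ZMod κ)) (ζ η : Hw κ) :
    wordProd κ L (ζ - η) = wordProd κ L ζ - wordProd κ L η := by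
  simpa using wordProd_sub_smul L ζ η 1

lemma wordProd_neg (L : List (ZMod κ)) (ζ : Hw κ) :
    wordProd κ L (-ζ) = - wordProd κ L ζ := by
  have h0 : wordProd κ L 0 = 0 := by simpa using wordProd_sub L 0 0
  simpa [h0] using wordProd_sub L 0 ζ

lemma wordProd_reverse (hκ : 1 < κ) (L : List (ZMod κ)) :
    wordProd κ L.reverse ∘ wordProd κ L = id := by
  induction L with
  | nil => rfl
  | cons i L ih =>
    rw [List.reverse_cons, wordProd_concat, wordProd_cons, Function.comp_assoc,
      ← Function.comp_assoc (sFun κ i), sFun_comp hκ, Function.id_comp, ih]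

lemma wordProd_reverse' (hκ : 1 < κ) (L : List (ZMod κ)) :
    wordProd κ L ∘ wordProd κ L.reverse = id := by
  simpa using wordProd_reverse hκ L.reverse

lemma bil_wordProd (hκ : 1 < κ) (L : List (ZMod κ)) (ζ η : Hw κ) :
    bil (wordProd κ L ζ) (wordProd κ L η) = bil ζ η := by
  induction L with
  | nil => rfl
  | cons i L ih => simp only [wordProd_cons, Function.comp_apply, bil_sFun hκ, ih]

/-- If `w α_i = α_j` then `w s_i = s_j w`. -/
lemma conj_refl (hκ : 1 < κ) (L : List (ZMod κ)) (i j : ZMod κ)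
    (h : wordProd κ L (alphaR κ i) = alphaR κ j) :
    wordProd κ L ∘ sFun κ i = sFun κ j ∘ wordProd κ L := by
  funext ζ
  simp only [Function.comp_apply, sFun, wordProd_sub_smul, h]
  rw [← bil_alpha (wordProd κ L ζ) j, ← h, bil_wordProd hκ, bil_alpha]

/-! ### The action on integers -/

/-- The affine transposition attached to `s_i`: it exchanges `n` and `n + 1` for `n ≡ i`. -/
def tr (i : ZMod κ) (n : ℤ) : ℤ :=
  if (n : ZMod κ) = i then n + 1 else if (n : ZMod κ) = i + 1 then n - 1 else n

/-- The affine permutation of a word. -/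
def perm : List (ZMod κ) → ℤ → ℤ
  | [], n => n
  | i :: L, n => tr i (perm L n)

lemma perm_append (L M : List (ZMod κ)) (n : ℤ) : perm (L ++ M) n = perm L (perm M n) := by
  induction L with
  | nil => rfl
  | cons i L ih => simp only [List.cons_append, perm, ih]

lemma tr_tr (hκ : 1 < κ) (i : ZMod κ) (n : ℤ) : tr i (tr i n) = n := by
  have : Fact (1 < κ) := ⟨hκ⟩
  unfold tr
  by_cases h1 : (n : ZMod κ) = i
  · simp [h1]
  · by_cases h2 : (n : ZMod κ) = i + 1
    · simp [h2]
    · simp [h1, h2]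

lemma perm_reverse (hκ : 1 < κ) (L : List (ZMod κ)) (n : ℤ) : perm L.reverse (perm L n) = n := by
  induction L with
  | nil => rfl
  | cons i L ih => simp only [List.reverse_cons, perm_append, perm, tr_tr hκ, ih]

lemma perm_reverse' (hκ : 1 < κ) (L : List (ZMod κ)) (n : ℤ) : perm L (perm L.reverse n) = n := by
  simpa using perm_reverse hκ L.reverse n

lemma tr_period (i : ZMod κ) (n j : ℤ) : tr i (n + j * κ) = tr i n + j * κ := by
  unfold tr
  have : ((n + j * κ : ℤ) : ZMod κ) = n := by simp
  rw [this]
  split_ifs <;> ring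

lemma perm_period (L : List (ZMod κ)) (n j : ℤ) : perm L (n + j * κ) = perm L n + j * κ := by
  induction L with
  | nil => rfl
  | cons i L ih => simp only [perm, ih, tr_period]

lemma cast_eq_iff (a b : ℤ) : (a : ZMod κ) = (b : ZMod κ) ↔ ∃ j : ℤ, a = b + j * κ := by
  rw [← sub_eq_zero, ← Int.cast_sub, ZMod.intCast_zmod_eq_zero_iff_dvd]
  constructor
  · rintro ⟨c, hc⟩; exact ⟨c, by linarith⟩
  · rintro ⟨c, hc⟩; exact ⟨c, by linarith⟩

lemma perm_cast_ne (hκ : 1 < κ) (L : List (ZMod κ)) {a b : ℤ} (h : (a : ZMod κ) ≠ b) :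
    (perm L a : ZMod κ) ≠ perm L b := by
  intro h'
  obtain ⟨j, hj⟩ := (cast_eq_iff _ _).1 h'
  apply h
  rw [cast_eq_iff]
  refine ⟨j, ?_⟩
  have := congrArg (perm L.reverse) hj
  rwa [perm_period, perm_reverse hκ, perm_reverse hκ] at this

/-- The only pairs `a < b` that `tr i` does not keep in order are `(n, n + 1)` with `n ≡ i`. -/
lemma tr_lt (hκ : 1 < κ) (i : ZMod κ) {a b : ℤ} (hab : a < b)
    (h : ¬ ((a : ZMod κ) = i ∧ b = a + 1)) : tr i a < tr i b := by
  have : Fact (1 < κ) := ⟨hκ⟩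
  have h1 : a + 1 = b → (b : ZMod κ) = a + 1 := by rintro rfl; simp
  have h2 : a + 2 = b → (b : ZMod κ) = a + 2 := by rintro rfl; simp
  have h3 : (1 : ZMod κ) ≠ 0 := one_ne_zero
  unfold tr
  split_ifs with c1 c2 c3 c4 _ _ _ c6
  · omega
  · have : a + 2 ≠ b := fun e => h3 (by linear_combination -h2 e + c3 - c1)
    have : ¬ (b = a + 1) := fun e => h ⟨c1, e⟩
    omega
  · have : ¬ (b = a + 1) := fun e => h ⟨c1, e⟩
    omega
  · omega
  · omega
  · omega
  · omega
  · have : a + 1 ≠ b := fun e => c1 (by linear_combination c6 - h1 e)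
    omega
  · omega

/-- The root `ε_p - ε_q`, equal to `α_p + ⋯ + α_{q-1}` when `p < q`. -/
def rt (κ : ℕ) (p q : ℤ) : Hw κ := Epot κ q - Epot κ p

lemma alpha_eq_rt (n : ℤ) : alphaR κ (n : ZMod κ) = rt κ n (n + 1) := by
  rw [rt, Epot_succ]; abel

lemma rt_neg (p q : ℤ) : - rt κ p q = rt κ q p := by simp [rt]

lemma sFun_Epot (hκ : 1 < κ) (i : ZMod κ) (n : ℤ) :
    sFun κ i (Epot κ n) - Epot κ (tr i n) = sFun κ i (Epot κ 0) - Epot κ (tr i 0) := by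
  have : Fact (1 < κ) := ⟨hκ⟩
  have step : ∀ n : ℤ, sFun κ i (Epot κ (n+1)) - Epot κ (tr i (n+1)) =
      sFun κ i (Epot κ n) - Epot κ (tr i n) := by
    intro n
    have h3 : (1 : ZMod κ) ≠ 0 := one_ne_zero
    have e1 := Epot_succ (κ := κ) n
    have e2 := Epot_succ (κ := κ) (n + 1)
    have e0 := Epot_succ (κ := κ) (n - 1)
    rw [sub_add_cancel] at e0
    have hs : sFun κ i (Epot κ (n+1)) = sFun κ i (Epot κ n) + alphaR κ n
        - cartan κ i n • alphaR κ i := by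
      simp only [sFun, e1, pairSimple_add, pairSimple_alpha, add_smul]; abel
    rw [hs]
    push_cast at e0 e1 e2
    -- the four cases `n ≡ i`, `n ≡ i - 1`, `n ≡ i + 1`, and none, the middle two may coincide
    by_cases c1 : (n : ZMod κ) = i
    · have t1 : tr i n = n + 1 := by simp [tr, c1]
      have t2 : tr i (n + 1) = n := by simp [tr, c1]
      rw [t1, t2, e1, c1, cartan_self hκ]
      module
    · by_cases c2 : (n : ZMod κ) + 1 = i
      · have t2 : tr i (n + 1) = n + 1 + 1 := by simp [tr, c2]
        have d : i - n = 1 := by linear_combination -c2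
        by_cases c3 : (n : ZMod κ) = i + 1
        · have t1 : tr i n = n - 1 := by simp [tr, c3]
          have d' : i - n = -1 := by linear_combination -c3
          have hc : cartan κ i n = -2 := by
            simp only [cartan, d]
            rw [← d', d]; simp [Ne.symm c1]; norm_num
          have e0' : (n : ZMod κ) - 1 = i := by linear_combination c3
          rw [t1, t2, e2, e1, hc, e0, c2, e0']
          module
        · have t1 : tr i n = n := by simp [tr, c1, c3]
          have d' : i - n ≠ -1 := fun h => c3 (by linear_combination -h)
          have hc : cartan κ i n = -1 := by
            rw [cartan, if_neg (Ne.symm c1), if_pos d, if_neg d']; norm_num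
          rw [t1, t2, e2, e1, hc, c2]
          module
      · have d : i - n ≠ 1 := fun h => c2 (by linear_combination -h)
        have t2 : tr i (n + 1) = n + 1 := by
          simp [tr, c1, c2]
        by_cases c3 : (n : ZMod κ) = i + 1
        · have t1 : tr i n = n - 1 := by simp [tr, c3]
          have d' : i - n = -1 := by linear_combination -c3
          have hc : cartan κ i n = -1 := by
            rw [cartan, if_neg (Ne.symm c1), if_neg d, if_pos d']; norm_num
          have e0' : (n : ZMod κ) - 1 = i := by linear_combination c3
          rw [t1, t2, e1, hc, e0, e0']
          module
        · have t1 : tr i n = n := by simp [tr, c1, c3]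
          have d' : i - n ≠ -1 := fun h => c3 (by linear_combination -h)
          have hc : cartan κ i n = 0 := by
            rw [cartan, if_neg (Ne.symm c1), if_neg d, if_neg d']; norm_num
          rw [t1, t2, e1, hc]
          module
  induction n using Int.induction_on with
  | zero => rfl
  | succ n ih => rw [step, ih]
  | pred n ih => rw [← ih, ← step]; simp

lemma sFun_rt (hκ : 1 < κ) (i : ZMod κ) (p q : ℤ) :
    sFun κ i (rt κ p q) = rt κ (tr i p) (tr i q) := by
  have h := sFun_sub_smul i (Epot κ q) (Epot κ p) 1
  simp only [one_smul] at h
  rw [rt, rt, h]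
  have a := sFun_Epot hκ i q
  have b := sFun_Epot hκ i p
  rw [← b] at a
  rw [sub_eq_sub_iff_sub_eq_sub]
  exact a

lemma wordProd_rt (hκ : 1 < κ) (L : List (ZMod κ)) (p q : ℤ) :
    wordProd κ L (rt κ p q) = rt κ (perm L p) (perm L q) := by
  induction L with
  | nil => rfl
  | cons i L ih => simp only [wordProd_cons, Function.comp_apply, ih, sFun_rt hκ, perm]

/-- A quasi-periodic function on `ℤ` extends to a linear functional on `h*`. -/
lemma exists_functional (ψ : ℤ → ℚ) (D : ℚ) (hψ : ∀ n, ψ (n + κ) = ψ n + D) :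
    ∃ φ : Hw κ →ₗ[ℚ] ℚ, ∀ p q, φ (rt κ p q) = ψ q - ψ p := by
  classical
  let φ : Hw κ →ₗ[ℚ] ℚ :=
    { toFun := fun β => ∑ i, β.1 i * (ψ (i.val + 1) - ψ i.val)
      map_add' := fun x y => by simp [add_mul, Finset.sum_add_distrib]
      map_smul' := fun c x => by simp [Finset.mul_sum, mul_assoc] }
  have hj : ∀ (n : ℤ) (j : ℤ), ψ (n + j * κ) = ψ n + j * D := by
    intro n j
    induction j using Int.induction_on with
    | zero => simp
    | succ j ih =>
      rw [show n + ((j : ℤ) + 1) * κ = (n + j * κ) + κ by ring, hψ, ih]; push_cast; ring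
    | pred j ih =>
      have := hψ (n + (-(j : ℤ) - 1) * κ)
      rw [show n + (-(j : ℤ) - 1) * κ + κ = n + -(j:ℤ) * κ by ring, ih] at this
      push_cast at this ⊢
      linarith
  have hα : ∀ n : ℤ, φ (alphaR κ (n : ZMod κ)) = ψ (n + 1) - ψ n := by
    intro n
    have : φ (alphaR κ (n : ZMod κ)) = ψ ((n : ZMod κ).val + 1) - ψ ((n : ZMod κ).val) := by
      show (∑ i, (alphaR κ (n : ZMod κ)).1 i * (ψ (i.val + 1) - ψ i.val)) = _
      simp [alphaR, Pi.single_apply]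
    rw [this]
    obtain ⟨j, hj'⟩ := (cast_eq_iff (κ := κ) n ((n : ZMod κ).val)).1 (by simp)
    generalize ((n : ZMod κ).val : ℤ) = v at hj' ⊢
    rw [hj', hj, show v + j * κ + 1 = (v + 1) + j * κ by ring, hj]
    ring
  have hE : ∀ n : ℤ, φ (Epot κ n) - ψ n = φ (Epot κ 0) - ψ 0 := by
    have step : ∀ n : ℤ, φ (Epot κ (n + 1)) - ψ (n + 1) = φ (Epot κ n) - ψ n := by
      intro n; rw [Epot_succ, map_add, hα]; ring
    intro n
    induction n using Int.induction_on with
    | zero => rfl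
    | succ n ih => rw [step, ih]
    | pred n ih => rw [← ih, ← step]; simp
  exact ⟨φ, fun p q => by rw [rt, map_sub]; linarith [hE p, hE q]⟩

lemma rt_mem_QPos {p q : ℤ} (h : p ≤ q) : rt κ p q ∈ QPos κ := by
  obtain ⟨k, rfl⟩ := Int.le.dest h
  clear h
  induction k with
  | zero => exact ⟨by simp [rt], fun i => ⟨0, by simp [rt]⟩⟩
  | succ k ih =>
    have e : rt κ p (p + (k + 1 : ℕ)) = rt κ p (p + k) + alphaR κ ((p + k : ℤ) : ZMod κ) := by
      rw [rt, rt]; push_cast; rw [← add_assoc, Epot_succ]; push_cast; abel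
    rw [e]
    refine ⟨by simp [ih.1, alphaR], fun i => ?_⟩
    obtain ⟨n, hn⟩ := ih.2 i
    by_cases c : i = ((p + k : ℤ) : ZMod κ)
    · exact ⟨n + 1, by
        rw [Prod.fst_add, Pi.add_apply, hn, alphaR, c]; dsimp only; rw [Pi.single_eq_same]; push_cast; rfl⟩
    · exact ⟨n, by rw [Prod.fst_add, Pi.add_apply, hn, alphaR]; dsimp only; rw [Pi.single_eq_of_ne c, add_zero]⟩

lemma rt_QPos_le {p q : ℤ} (h : rt κ p q ∈ QPos κ) : p ≤ q := by
  by_contra hc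
  push Not at hc
  have h' := rt_mem_QPos (κ := κ) hc.le
  have hz : rt κ p q = 0 := by
    refine Prod.ext (funext fun i => ?_) h.1
    obtain ⟨n, hn⟩ := h.2 i
    obtain ⟨k, hk⟩ := h'.2 i
    rw [← rt_neg] at hk
    have : (n : ℚ) + k = 0 := by rw [← hn, ← hk]; simp
    have : n = 0 := by
      have : n + k = 0 := by exact_mod_cast this
      omega
    rw [hn, this]; simp
  obtain ⟨φ, hφ⟩ := exists_functional (κ := κ) (fun n => (n : ℚ)) κ (by intro n; push_cast; ring)
  have := hφ p q
  rw [hz, map_zero] at this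
  have : (p : ℚ) = q := by linarith
  have : p = q := by exact_mod_cast this
  omega

end Roots

/-! ### Length, inversion sets and the weak order -/

section Weyl

variable {κ : ℕ} [NeZero κ]

lemma exists_int (i : ZMod κ) : ∃ n : ℤ, (n : ZMod κ) = i := ⟨i.val, by simp⟩

lemma cast_ne_succ (hκ : 1 < κ) (n : ℤ) : (n : ZMod κ) ≠ ((n + 1 : ℤ) : ZMod κ) := by
  have : Fact (1 < κ) := ⟨hκ⟩
  simp

lemma Rset_form (hκ : 1 < κ) {β : Hw κ} (h : β ∈ Rset κ) :
    ∃ p q : ℤ, (p : ZMod κ) ≠ q ∧ β = rt κ p q := by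
  obtain ⟨L, i, rfl⟩ := h
  obtain ⟨n, rfl⟩ := exists_int i
  exact ⟨perm L n, perm L (n + 1), perm_cast_ne hκ L (cast_ne_succ hκ n), by
    rw [alpha_eq_rt, wordProd_rt hκ]⟩

lemma Rset_word {β : Hw κ} (L : List (ZMod κ)) (h : β ∈ Rset κ) : wordProd κ L β ∈ Rset κ := by
  obtain ⟨M, i, rfl⟩ := h
  exact ⟨L ++ M, i, by rw [wordProd_append]; rfl⟩

lemma Rset_neg (hκ : 1 < κ) {β : Hw κ} (h : β ∈ Rset κ) : -β ∈ Rset κ := by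
  obtain ⟨M, i, rfl⟩ := h
  refine ⟨M ++ [i], i, ?_⟩
  rw [wordProd_concat, Function.comp_apply, ← wordProd_neg]
  congr 1
  rw [sFun, pairSimple_alpha, cartan_self hκ]
  module

lemma rt_mem_Rset (hκ : 1 < κ) {p q : ℤ} (h : (p : ZMod κ) ≠ q) : rt κ p q ∈ Rset κ := by
  have : Fact (1 < κ) := ⟨hκ⟩
  have main : ∀ k : ℕ, ∀ p q : ℤ, p < q → (p : ZMod κ) ≠ q → (q - p).toNat = k →
      rt κ p q ∈ Rset κ := by
    intro k
    induction k using Nat.strong_induction_on with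
    | _ k ih =>
      intro p q hpq hne hk
      by_cases h1 : q = p + 1
      · subst h1
        exact ⟨[], (p : ZMod κ), by rw [← alpha_eq_rt]; rfl⟩
      -- `s_{q-1}` lowers the upper end of the interval
      · set i : ZMod κ := ((q - 1 : ℤ) : ZMod κ) with hi
        have hiq : (q : ZMod κ) = i + 1 := by rw [hi]; push_cast; ring
        have tq : tr i q = q - 1 := by
          rw [tr, if_neg (by rw [hiq]; simp), if_pos hiq]
        have tp : p ≤ tr i p := by
          rw [tr, if_neg (c := (p : ZMod κ) = i + 1) (by rw [← hiq]; exact hne)]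
          split_ifs <;> omega
        have hlt : tr i p < tr i q := tr_lt hκ i hpq (fun h => h1 h.2)
        have hne' : (tr i p : ZMod κ) ≠ tr i q := perm_cast_ne hκ [i] hne
        have := ih (tr i q - tr i p).toNat (by omega) _ _ hlt hne' rfl
        have e := sFun_rt hκ i (tr i p) (tr i q)
        rw [tr_tr hκ, tr_tr hκ] at e
        rw [← e]
        exact Rset_word [i] this
  rcases lt_trichotomy p q with h1 | h1 | h1
  · exact main _ p q h1 h rfl
  · exact absurd (by rw [h1]) h
  · rw [← rt_neg]
    exact Rset_neg hκ (main _ q p h1 h.symm rfl)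

/-- The exchange condition. -/
lemma exchange (hκ : 1 < κ) (L : List (ZMod κ)) (n : ℤ) (h : perm L (n + 1) < perm L n) :
    ∃ L' : List (ZMod κ), L'.length + 1 = L.length ∧
      wordProd κ L' = wordProd κ L ∘ sFun κ (n : ZMod κ) := by
  induction L with
  | nil => simp [perm] at h
  | cons j L ih =>
    by_cases h1 : perm L (n + 1) < perm L n
    · obtain ⟨L', h2, h3⟩ := ih h1
      exact ⟨j :: L', by simp [h2], by rw [wordProd_cons, wordProd_cons, h3]; rfl⟩
    · have hne : perm L n ≠ perm L (n + 1) := fun e =>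
        perm_cast_ne hκ L (cast_ne_succ hκ n) (by rw [e])
      have h2 : perm L n < perm L (n + 1) := by omega
      have h3 : (perm L n : ZMod κ) = j ∧ perm L (n + 1) = perm L n + 1 := by
        by_contra hc
        have := tr_lt hκ j h2 hc
        simp only [perm] at h
        omega
      refine ⟨L, rfl, ?_⟩
      have h4 : wordProd κ L (alphaR κ (n : ZMod κ)) = alphaR κ j := by
        rw [alpha_eq_rt, wordProd_rt hκ, h3.2, ← alpha_eq_rt, h3.1]
      rw [wordProd_cons, Function.comp_assoc, conj_refl hκ L _ _ h4, ← Function.comp_assoc,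
        sFun_comp hκ, Function.id_comp]

lemma len_word (L : List (ZMod κ)) :
    ∃ M : List (ZMod κ), M.length = len κ (wordProd κ L) ∧ wordProd κ M = wordProd κ L :=
  Nat.sInf_mem (s := {r : ℕ | ∃ M : List (ZMod κ), M.length = r ∧ wordProd κ M = wordProd κ L})
    ⟨_, L, rfl, rfl⟩

lemma len_le (L : List (ZMod κ)) : len κ (wordProd κ L) ≤ L.length :=
  Nat.sInf_le ⟨L, rfl, rfl⟩

lemma perm_eq_of_wordProd (hκ : 1 < κ) {L M : List (ZMod κ)} (h : wordProd κ L = wordProd κ M)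
    (p q : ℤ) : perm L p < perm L q ↔ perm M p < perm M q := by
  obtain ⟨φ, hφ⟩ := exists_functional (κ := κ) (fun n => (n : ℚ)) κ (by intro n; push_cast; ring)
  have e : rt κ (perm L p) (perm L q) = rt κ (perm M p) (perm M q) := by
    rw [← wordProd_rt hκ, ← wordProd_rt hκ, h]
  have e2 := congrArg φ e
  rw [hφ, hφ] at e2
  have : perm L q - perm L p = perm M q - perm M p := by exact_mod_cast e2
  omega

lemma len_descent (hκ : 1 < κ) (L : List (ZMod κ)) (n : ℤ) (h : perm L (n + 1) < perm L n) :
    len κ (wordProd κ (L ++ [(n : ZMod κ)])) + 1 ≤ len κ (wordProd κ L) := by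
  obtain ⟨M, hM, hM'⟩ := len_word L
  obtain ⟨L', h1, h2⟩ := exchange hκ M n ((perm_eq_of_wordProd hκ hM' _ _).2 h)
  rw [wordProd_concat, ← hM', ← h2]
  have := len_le L'
  rw [hM'] 
  omega

lemma wordProd_concat_twice (hκ : 1 < κ) (L : List (ZMod κ)) (i : ZMod κ) :
    wordProd κ ((L ++ [i]) ++ [i]) = wordProd κ L := by
  rw [wordProd_concat, wordProd_concat, Function.comp_assoc, sFun_comp hκ, Function.comp_id]

lemma perm_concat (hκ : 1 < κ) (L : List (ZMod κ)) (n : ℤ) :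
    perm (L ++ [(n : ZMod κ)]) n = perm L (n + 1) ∧
      perm (L ++ [(n : ZMod κ)]) (n + 1) = perm L n := by
  have : Fact (1 < κ) := ⟨hκ⟩
  constructor <;> rw [perm_append] <;> simp [perm, tr]

lemma perm_succ_or (hκ : 1 < κ) (L : List (ZMod κ)) (n : ℤ) :
    perm L n < perm L (n + 1) ∨ perm L (n + 1) < perm L n := by
  have hne : perm L n ≠ perm L (n + 1) := fun e =>
    perm_cast_ne hκ L (cast_ne_succ hκ n) (by rw [e])
  omega

lemma len_ascent (hκ : 1 < κ) (L : List (ZMod κ)) (n : ℤ) (h : perm L n < perm L (n + 1)) :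
    len κ (wordProd κ (L ++ [(n : ZMod κ)])) = len κ (wordProd κ L) + 1 := by
  have h1 := len_descent hκ (L ++ [(n : ZMod κ)]) n (by
    rw [(perm_concat hκ L n).1, (perm_concat hκ L n).2]; exact h)
  rw [wordProd_concat_twice hκ] at h1
  obtain ⟨M, hM, hM'⟩ := len_word L
  have h2 := len_le (M ++ [(n : ZMod κ)])
  rw [wordProd_concat, hM', ← wordProd_concat, List.length_append, hM] at h2
  simp only [List.length_singleton] at h2
  omega

lemma ascent_of_len (hκ : 1 < κ) (L : List (ZMod κ)) (n : ℤ)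
    (h : len κ (wordProd κ (L ++ [(n : ZMod κ)])) = len κ (wordProd κ L) + 1) :
    perm L n < perm L (n + 1) := by
  rcases perm_succ_or hκ L n with h1 | h1
  · exact h1
  · have := len_descent hκ L n h1
    omega

/-- An element of `W` without descents is trivial. -/
lemma eq_id_of_no_descent (hκ : 1 < κ) (L : List (ZMod κ))
    (h : ∀ n : ℤ, perm L n < perm L (n + 1)) : wordProd κ L = id := by
  obtain ⟨M, hM, hM'⟩ := len_word L
  rcases List.eq_nil_or_concat M with rfl | ⟨M', i, rfl⟩
  · exact hM'.symm
  · exfalso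
    obtain ⟨n, rfl⟩ := exists_int i
    rw [List.concat_eq_append] at hM hM'
    have h1 := len_ascent hκ (M' ++ [(n : ZMod κ)]) n
      ((perm_eq_of_wordProd hκ hM' _ _).2 (h n))
    rw [wordProd_concat_twice hκ, hM', ← hM, List.length_append] at h1
    have := len_le M'
    omega

/-- Membership of roots in inversion sets, read off the inverse affine permutation. -/
lemma rt_mem_invSet (hκ : 1 < κ) (L : List (ZMod κ)) {p q : ℤ} (hne : (p : ZMod κ) ≠ q) :
    rt κ p q ∈ invSet κ (wordProd κ L) ↔ p < q ∧ perm L.reverse q < perm L.reverse p := by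
  have hpq : p ≠ q := fun e => hne (by rw [e])
  have hne' := perm_cast_ne hκ L.reverse hne
  constructor
  · rintro ⟨h1, γ, h2, h3⟩
    refine ⟨lt_of_le_of_ne (rt_QPos_le h1.2) hpq, ?_⟩
    have e : γ = rt κ (perm L.reverse p) (perm L.reverse q) := by
      rw [← wordProd_rt hκ, ← h3]
      exact (congrFun (wordProd_reverse hκ L) γ).symm
    have h4 : -γ ∈ QPos κ := h2.2
    rw [e, rt_neg] at h4
    exact lt_of_le_of_ne (rt_QPos_le h4) (fun e => hne' (by rw [e]))
  · rintro ⟨h1, h2⟩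
    refine ⟨⟨rt_mem_Rset hκ hne, rt_mem_QPos h1.le⟩,
      rt κ (perm L.reverse p) (perm L.reverse q), ?_, ?_⟩
    · show - rt κ _ _ ∈ Rpos κ
      rw [rt_neg]
      exact ⟨rt_mem_Rset hκ hne'.symm, rt_mem_QPos h2.le⟩
    · rw [wordProd_rt hκ, perm_reverse' hκ, perm_reverse' hκ]

lemma invSet_form (hκ : 1 < κ) {w : Hw κ → Hw κ} {β : Hw κ} (h : β ∈ invSet κ w) :
    ∃ p q : ℤ, (p : ZMod κ) ≠ q ∧ β = rt κ p q := Rset_form hκ h.1.1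

lemma invSet_nil (hκ : 1 < κ) : invSet κ (wordProd κ []) = ∅ := by
  ext β
  refine ⟨fun h => ?_, fun h => h.elim⟩
  obtain ⟨p, q, hne, rfl⟩ := invSet_form hκ h
  have := (rt_mem_invSet hκ [] hne).1 h
  simp only [List.reverse_nil, perm] at this
  omega

lemma invSet_concat (hκ : 1 < κ) (L : List (ZMod κ)) (n : ℤ) (h : perm L n < perm L (n + 1)) :
    invSet κ (wordProd κ (L ++ [(n : ZMod κ)])) =
      insert (rt κ (perm L n) (perm L (n + 1))) (invSet κ (wordProd κ L)) := by
  have key : ∀ p q : ℤ, (p : ZMod κ) ≠ q →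
      (rt κ p q ∈ invSet κ (wordProd κ (L ++ [(n : ZMod κ)])) ↔
        rt κ p q ∈ insert (rt κ (perm L n) (perm L (n + 1))) (invSet κ (wordProd κ L))) := by
    intro p q hne
    rw [Set.mem_insert_iff, rt_mem_invSet hκ _ hne, rt_mem_invSet hκ _ hne]
    simp only [List.reverse_append, List.reverse_singleton, List.singleton_append, perm]
    obtain ⟨x, rfl⟩ : ∃ x, p = perm L x := ⟨_, (perm_reverse' hκ L p).symm⟩
    obtain ⟨y, rfl⟩ : ∃ y, q = perm L y := ⟨_, (perm_reverse' hκ L q).symm⟩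
    rw [perm_reverse hκ, perm_reverse hκ]
    have hxy : x ≠ y := fun e => hne (by rw [e])
    -- shifting a simple root by a multiple of the period does not change it
    have shift : ∀ z : ℤ, (z : ZMod κ) = n →
        rt κ (perm L z) (perm L (z + 1)) = rt κ (perm L n) (perm L (n + 1)) ∧
          perm L z < perm L (z + 1) := by
      intro z hz
      constructor
      · rw [← wordProd_rt hκ, ← wordProd_rt hκ, ← alpha_eq_rt, ← alpha_eq_rt, hz]
      · obtain ⟨j, rfl⟩ := (cast_eq_iff _ _).1 hz
        rw [show n + j * κ + 1 = (n + 1) + j * κ by ring, perm_period, perm_period]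
        omega
    constructor
    · rintro ⟨h1, h2⟩
      by_cases c : y < x
      · exact Or.inr ⟨h1, c⟩
      · left
        by_contra hc
        have := tr_lt hκ (n : ZMod κ) (a := x) (b := y) (by omega) (by
          rintro ⟨e1, rfl⟩
          exact hc (shift x e1).1)
        omega
    · rintro (h1 | ⟨h1, h2⟩)
      · -- equality of roots forces `y = x + 1` with `x ≡ n`, up to the period
        have e : rt κ x y = rt κ n (n + 1) := by
          have := congrArg (wordProd κ L.reverse) h1
          rw [wordProd_rt hκ, wordProd_rt hκ] at this
          simpa only [perm_reverse hκ] using this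
        obtain ⟨φ, hφ⟩ := exists_functional (κ := κ) (fun n => (n : ℚ)) κ
          (by intro n; push_cast; ring)
        have e1 := congrArg φ e
        have e2 := congrArg φ h1
        rw [hφ, hφ] at e1 e2
        have e1' : y - x = n + 1 - n := by exact_mod_cast e1
        have e2' : perm L y - perm L x = perm L (n + 1) - perm L n := by exact_mod_cast e2
        refine ⟨by omega, ?_⟩
        obtain rfl : y = x + 1 := by omega
        rw [← alpha_eq_rt, ← alpha_eq_rt] at e
        have hz : (x : ZMod κ) = n := by
          by_contra hc
          have := congrFun (congrArg Prod.fst e) (x : ZMod κ)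
          simp only [alphaR, Pi.single_eq_same, Pi.single_eq_of_ne hc] at this
          exact one_ne_zero this
        have := perm_concat hκ ([] : List (ZMod κ)) x
        simp only [List.nil_append, perm, hz] at this
        rw [this.1, this.2]
        omega
      · refine ⟨h1, tr_lt hκ _ h2 ?_⟩
        rintro ⟨e1, rfl⟩
        have := (shift y e1).2
        omega
  ext β
  constructor
  · intro hβ
    obtain ⟨p, q, hne, rfl⟩ := invSet_form hκ hβ
    exact (key p q hne).1 hβ
  · intro hβ
    have : ∃ p q : ℤ, (p : ZMod κ) ≠ q ∧ β = rt κ p q := by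
      rcases hβ with rfl | hβ
      · exact ⟨_, _, perm_cast_ne hκ L (cast_ne_succ hκ n), rfl⟩
      · exact invSet_form hκ hβ
    obtain ⟨p, q, hne, rfl⟩ := this
    exact (key p q hne).2 hβ

/-- An element of `W` is determined by its inversion set. -/
lemma eq_of_invSet (hκ : 1 < κ) (L M : List (ZMod κ))
    (h : invSet κ (wordProd κ L) = invSet κ (wordProd κ M)) : wordProd κ L = wordProd κ M := by
  have h1 : wordProd κ (M.reverse ++ L) = id := by
    refine eq_id_of_no_descent hκ _ fun n => ?_
    rw [perm_append, perm_append]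
    have hne := perm_cast_ne hκ L (cast_ne_succ hκ n)
    have hne2 := perm_cast_ne hκ M.reverse hne
    have hn : perm M.reverse (perm L n) ≠ perm M.reverse (perm L (n + 1)) :=
      fun e => hne2 (by rw [e])
    rcases perm_succ_or hκ L n with c | c
    · by_contra hc
      have : rt κ (perm L n) (perm L (n + 1)) ∈ invSet κ (wordProd κ M) :=
        (rt_mem_invSet hκ _ hne).2 ⟨c, by omega⟩
      rw [← h, rt_mem_invSet hκ _ hne, perm_reverse hκ, perm_reverse hκ] at this
      omega
    · have : rt κ (perm L (n + 1)) (perm L n) ∈ invSet κ (wordProd κ L) :=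
        (rt_mem_invSet hκ _ hne.symm).2 ⟨c, by rw [perm_reverse hκ, perm_reverse hκ]; omega⟩
      rw [h, rt_mem_invSet hκ _ hne.symm] at this
      exact this.2
  rw [wordProd_append] at h1
  calc wordProd κ L = (wordProd κ M ∘ wordProd κ M.reverse) ∘ wordProd κ L := by
        rw [wordProd_reverse' hκ]; rfl
    _ = wordProd κ M := by rw [Function.comp_assoc, h1]; rfl

lemma wble_invSet (hκ : 1 < κ) {v w : Hw κ → Hw κ} (hv : Wmem κ v) (h : wble κ v w) :
    Wmem κ w ∧ invSet κ v ⊆ invSet κ w := by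
  induction h with
  | refl => exact ⟨hv, subset_rfl⟩
  | tail _ h2 ih =>
    obtain ⟨⟨L, rfl⟩, h1⟩ := ih
    obtain ⟨i, rfl, h3⟩ := h2
    obtain ⟨n, rfl⟩ := exists_int i
    rw [← wordProd_concat] at h3 ⊢
    refine ⟨⟨_, rfl⟩, h1.trans ?_⟩
    rw [invSet_concat hκ L n (ascent_of_len hκ L n h3)]
    exact Set.subset_insert _ _

end Weyl

/-! ### Cells, rows and columns of the cylinder -/

section Geometry

variable {m l : ℕ}

/-- The cell of the cylinder with representative `(a, b)`. -/
def cell (m l : ℕ) (a b : ℤ) : Cyl m l := pr m l (a, b)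

lemma exists_cell (x : Cyl m l) : ∃ a b : ℤ, x = cell m l a b := by
  obtain ⟨⟨a, b⟩, h⟩ := QuotientAddGroup.mk'_surjective _ x
  exact ⟨a, b, h.symm⟩

lemma cell_eq {a b c d : ℤ} :
    cell m l a b = cell m l c d ↔ ∃ n : ℤ, a = c + n * m ∧ b = d - n * l := by
  have h : cell m l a b = cell m l c d ↔ cell m l c d = cell m l a b := eq_comm
  rw [h]
  unfold cell pr
  rw [QuotientAddGroup.mk'_apply, QuotientAddGroup.mk'_apply, QuotientAddGroup.eq,
    AddSubgroup.mem_zmultiples_iff]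
  refine exists_congr fun n => ?_
  simp only [om, Prod.ext_iff, Prod.smul_fst, Prod.smul_snd, Prod.fst_add, Prod.snd_add,
    Prod.fst_neg, Prod.snd_neg, smul_eq_mul]
  constructor <;> rintro ⟨h1, h2⟩ <;> constructor <;> linarith

lemma cell_add (a b s t : ℤ) : cell m l a b + pr m l (s, t) = cell m l (a + s) (b + t) := by
  unfold cell
  rw [← map_add]
  rfl

lemma cell_shift {a b c d : ℤ} (h : cell m l a b = cell m l c d) (s t : ℤ) :
    cell m l (a + s) (b + t) = cell m l (c + s) (d + t) := by
  rw [← cell_add, h, cell_add]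

lemma cell_period (a b n : ℤ) : cell m l (a + n * m) (b - n * l) = cell m l a b :=
  cell_eq.2 ⟨n, rfl, rfl⟩

lemma cle_cell {a b c d : ℤ} :
    cle m l (cell m l a b) (cell m l c d) ↔ ∃ n : ℤ, c + n * m ≤ a ∧ d - n * l ≤ b := by
  constructor
  · rintro ⟨⟨a', b'⟩, ⟨c', d'⟩, h1, h2, h3, h4⟩
    obtain ⟨n, rfl, rfl⟩ := cell_eq.1 h1
    obtain ⟨k, rfl, rfl⟩ := cell_eq.1 h2
    dsimp only at h3 h4
    exact ⟨k - n, by linarith, by linarith⟩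
  · rintro ⟨n, h1, h2⟩
    exact ⟨(a, b), (c + n * m, d - n * l), rfl, cell_period c d n, h1, h2⟩

lemma cle_of_le {a b c d : ℤ} (h1 : c ≤ a) (h2 : d ≤ b) :
    cle m l (cell m l a b) (cell m l c d) := cle_cell.2 ⟨0, by simpa using h1, by simpa using h2⟩

/-- Every element above a cell has a lift above the given lift. -/
lemma cle_lift {a b : ℤ} {y : Cyl m l} (h : cle m l (cell m l a b) y) :
    ∃ c d : ℤ, y = cell m l c d ∧ c ≤ a ∧ d ≤ b := by
  obtain ⟨c, d, rfl⟩ := exists_cell y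
  obtain ⟨n, h1, h2⟩ := cle_cell.1 h
  exact ⟨_, _, (cell_period c d n).symm, h1, h2⟩

/-- Every element below a cell has a lift below the given lift. -/
lemma cle_lift' {a b : ℤ} {y : Cyl m l} (h : cle m l y (cell m l a b)) :
    ∃ c d : ℤ, y = cell m l c d ∧ a ≤ c ∧ b ≤ d := by
  obtain ⟨c, d, rfl⟩ := exists_cell y
  obtain ⟨n, h1, h2⟩ := cle_cell.1 h
  exact ⟨_, _, (cell_period c d (-n)).symm, by linarith, by linarith⟩

/-- A rank function on the cylinder, strictly decreasing for the order. -/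
def rank (m l : ℕ) : Cyl m l → ℤ :=
  Quotient.lift (fun p : Z2 => (l : ℤ) * p.1 + m * p.2) (by
    rintro ⟨a, b⟩ ⟨c, d⟩ h
    obtain ⟨n, rfl, rfl⟩ := cell_eq.1 (Quotient.sound h : cell m l a b = cell m l c d)
    dsimp only
    ring)

lemma rank_cell (a b : ℤ) : rank m l (cell m l a b) = l * a + m * b := rfl

lemma cle_antisymm (hm : 1 ≤ m) (hl : 1 ≤ l) {x y : Cyl m l} (h1 : cle m l x y)
    (h2 : cle m l y x) : x = y := by
  obtain ⟨a, b, rfl⟩ := exists_cell x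
  obtain ⟨c, d, rfl, hc, hd⟩ := cle_lift h1
  obtain ⟨a', b', e, hc', hd'⟩ := cle_lift h2
  have r := congrArg (rank m l) e
  rw [rank_cell, rank_cell] at r
  have hm' : (1 : ℤ) ≤ m := by exact_mod_cast hm
  have hl' : (1 : ℤ) ≤ l := by exact_mod_cast hl
  have : c = a := by nlinarith
  have : d = b := by nlinarith
  subst_vars
  rfl

variable [NeZero (m + l)]

lemma con_cell (a b : ℤ) : con m l (cell m l a b) = ((b - a : ℤ) : ZMod (m + l)) := rfl

lemma con_eq {a b c d : ℤ} (h : ((b - a : ℤ) : ZMod (m + l)) = ((d - c : ℤ) : ZMod (m + l))) :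
    ∃ k : ℤ, cell m l a b = cell m l (c + k) (d + k) := by
  obtain ⟨j, hj⟩ := (cast_eq_iff _ _).1 h
  push_cast at hj
  refine ⟨a - c + j * m, cell_eq.2 ⟨-j, by ring, ?_⟩⟩
  linear_combination hj

/-- Order filters of the cylinder. -/
def Filt (θ : Set (Cyl m l)) : Prop := ∀ x ∈ θ, ∀ y, cle m l x y → y ∈ θ

lemma Filt.mem {θ : Set (Cyl m l)} (hF : Filt θ) {a b c d : ℤ} (h : cell m l a b ∈ θ)
    (h1 : c ≤ a) (h2 : d ≤ b) : cell m l c d ∈ θ := hF _ h _ (cle_of_le h1 h2)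

/-- The boundary edge of column `b` has content `p`: the lowest cell of the column
is `(b - p, b)`. -/
def IsCol (θ : Set (Cyl m l)) (b p : ℤ) : Prop :=
  cell m l (b - p) b ∈ θ ∧ cell m l (b - p + 1) b ∉ θ

/-- The boundary edge of row `a` has content `q`: the last cell of the row is `(a, a + q - 1)`. -/
def IsRow (θ : Set (Cyl m l)) (a q : ℤ) : Prop :=
  cell m l a (a + q - 1) ∈ θ ∧ cell m l a (a + q) ∉ θ

variable {θ : Set (Cyl m l)}

lemma col_mem (hF : Filt θ) {b p : ℤ} (h : IsCol θ b p) (a : ℤ) :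
    cell m l a b ∈ θ ↔ p ≤ b - a := by
  constructor
  · intro ha
    by_contra hc
    exact h.2 (hF.mem ha (by omega) le_rfl)
  · intro ha
    exact hF.mem h.1 (by omega) le_rfl

lemma row_mem (hF : Filt θ) {a q : ℤ} (h : IsRow θ a q) (b : ℤ) :
    cell m l a b ∈ θ ↔ b - a < q := by
  constructor
  · intro ha
    by_contra hc
    exact h.2 (hF.mem ha le_rfl (by omega))
  · intro ha
    exact hF.mem h.1 le_rfl (by omega)

lemma col_le (hF : Filt θ) {b p b' p' : ℤ} (h : IsCol θ b p) (h' : IsCol θ b' p') (hb : b' < b) :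
    p' < p := by
  have := (col_mem hF h' (b - p)).1 (hF.mem h.1 le_rfl hb.le)
  omega

lemma row_le (hF : Filt θ) {a q a' q' : ℤ} (h : IsRow θ a q) (h' : IsRow θ a' q') (hb : a < a') :
    q' < q := by
  have := (row_mem hF h (a' + q' - 1)).1 (hF.mem h'.1 hb.le le_rfl)
  omega

lemma col_period {b p : ℤ} (h : IsCol θ b p) (j : ℤ) :
    IsCol θ (b + j * l) (p + j * (m + l : ℕ)) := by
  unfold IsCol at *
  have e : cell m l (b + j * l - (p + j * (m + l : ℕ))) (b + j * l) = cell m l (b - p) b :=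
    cell_eq.2 ⟨-j, by push_cast; ring, by ring⟩
  have e' := cell_shift e 1 0
  simp only [add_zero] at e'
  rw [e, e']
  exact h

lemma row_period {a q : ℤ} (h : IsRow θ a q) (j : ℤ) :
    IsRow θ (a - j * m) (q + j * (m + l : ℕ)) := by
  unfold IsRow at *
  have e : cell m l (a - j * m) (a - j * m + (q + j * (m + l : ℕ))) = cell m l a (a + q) :=
    cell_eq.2 ⟨-j, by ring, by push_cast; ring⟩
  have e' := cell_shift e 0 (-1)
  simp only [add_zero, ← sub_eq_add_neg] at e'
  rw [e, e']
  exact h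

lemma exists_col_period (n : ℤ) :
    (∃ b, IsCol θ b (n + (m + l : ℕ))) ↔ ∃ b, IsCol θ b n := by
  constructor
  · rintro ⟨b, hb⟩
    have := col_period hb (-1)
    rw [show n + (m + l : ℕ) + (-1) * (m + l : ℕ) = n by ring] at this
    exact ⟨_, this⟩
  · rintro ⟨b, hb⟩
    have := col_period hb 1
    rw [show n + 1 * ((m + l : ℕ) : ℤ) = n + (m + l : ℕ) by ring] at this
    exact ⟨_, this⟩

lemma col_row_ne (hF : Filt θ) {b p a q : ℤ} (h : IsCol θ b p) (h' : IsRow θ a q) : p ≠ q := by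
  rintro rfl
  by_cases c : a ≤ b - p
  · exact h'.2 (hF.mem h.1 c (by omega))
  · exact h.2 (hF.mem h'.1 (by omega) (by omega))

lemma col_row_cast_ne (hF : Filt θ) {b p a q : ℤ} (h : IsCol θ b p) (h' : IsRow θ a q) :
    (p : ZMod (m + l)) ≠ q := by
  intro e
  obtain ⟨j, hj⟩ := (cast_eq_iff _ _).1 e
  exact col_row_ne hF h (row_period h' j) hj

lemma exists_col (hl : 1 ≤ l) (hθ : IsCylindric m l θ) (b : ℤ) : ∃ p, IsCol θ b p := by
  obtain ⟨⟨x, hx⟩, hu, hF⟩ := hθ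
  obtain ⟨y, hy⟩ := (Set.ne_univ_iff_exists_notMem θ).1 hu
  obtain ⟨a, d, rfl⟩ := exists_cell x
  obtain ⟨a', d', rfl⟩ := exists_cell y
  have hl' : (1 : ℤ) ≤ l := by exact_mod_cast hl
  have h1 : ∃ p : ℤ, cell m l (b - p) b ∈ θ := by
    refine ⟨b - (a - |b - d| * m), hF _ hx _ (cle_cell.2 ⟨|b - d|, by linarith, ?_⟩)⟩
    nlinarith [le_abs_self (b - d), abs_nonneg (b - d)]
  have h2 : ∃ c : ℤ, ∀ p : ℤ, cell m l (b - p) b ∈ θ → c ≤ p := by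
    refine ⟨b - (a' + |d' - b| * m), fun p hp => ?_⟩
    by_contra hc
    refine hy (hF _ hp _ (cle_cell.2 ⟨|d' - b|, by linarith, ?_⟩))
    nlinarith [le_abs_self (d' - b), abs_nonneg (d' - b)]
  obtain ⟨p, hp, hmin⟩ := Int.exists_least_of_bdd h2 h1
  refine ⟨p, hp, fun hc => ?_⟩
  have := hmin (p - 1) (by rwa [show b - (p - 1) = b - p + 1 by ring])
  omega

lemma exists_row (hm : 1 ≤ m) (hθ : IsCylindric m l θ) (a : ℤ) : ∃ q, IsRow θ a q := by
  obtain ⟨⟨x, hx⟩, hu, hF⟩ := hθ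
  obtain ⟨y, hy⟩ := (Set.ne_univ_iff_exists_notMem θ).1 hu
  obtain ⟨c, d, rfl⟩ := exists_cell x
  obtain ⟨c', d', rfl⟩ := exists_cell y
  have hm' : (1 : ℤ) ≤ m := by exact_mod_cast hm
  have h1 : ∃ q : ℤ, cell m l a (a + q - 1) ∈ θ := by
    refine ⟨d - |a - c| * l - a + 1, hF _ hx _ (cle_cell.2 ⟨-|a - c|, ?_, by linarith⟩)⟩
    nlinarith [le_abs_self (a - c), abs_nonneg (a - c)]
  have h2 : ∃ B : ℤ, ∀ q : ℤ, cell m l a (a + q - 1) ∈ θ → q ≤ B := by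
    refine ⟨d' + |c' - a| * l - a + 1, fun q hq => ?_⟩
    by_contra hc
    refine hy (hF _ hq _ (cle_cell.2 ⟨-|c' - a|, ?_, by linarith⟩))
    nlinarith [le_abs_self (c' - a), abs_nonneg (c' - a)]
  obtain ⟨q, hq, hmax⟩ := Int.exists_greatest_of_bdd h2 h1
  refine ⟨q, hq, fun hc => ?_⟩
  have := hmax (q + 1) (by rwa [show a + (q + 1) - 1 = a + q by ring])
  omega

/-! ### Removal of a minimal cell -/

/-- Removing the minimal cell `(a₀, b₀)` changes the boundary edge of each column by the affine
transposition of the content of that cell. -/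
lemma col_step (hκ : 1 < m + l) (hF : Filt θ) {a₀ b₀ : ℤ} (hx : cell m l a₀ b₀ ∈ θ)
    (h1 : cell m l (a₀ + 1) b₀ ∉ θ) (h2 : cell m l a₀ (b₀ + 1) ∉ θ) {b p : ℤ}
    (h : IsCol (θ \ {cell m l a₀ b₀}) b p) : IsCol θ b (tr (con m l (cell m l a₀ b₀)) p) := by
  have : Fact (1 < m + l) := ⟨hκ⟩
  obtain ⟨⟨h3, h4⟩, h5⟩ := h
  have h4' : cell m l (b - p) b ≠ cell m l a₀ b₀ := h4
  by_cases c : cell m l (b - p + 1) b = cell m l a₀ b₀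
  · have e : (p : ZMod (m + l)) = con m l (cell m l a₀ b₀) + 1 := by
      rw [← c, con_cell]; push_cast; ring
    have ht : tr (con m l (cell m l a₀ b₀)) p = p - 1 := by
      rw [tr, if_neg (by rw [e]; simp), if_pos e]
    rw [ht]
    have c' := cell_shift c 1 0
    rw [add_zero, add_zero] at c'
    refine ⟨?_, ?_⟩
    · rw [show b - (p - 1) = b - p + 1 by ring, c]; exact hx
    · rw [show b - (p - 1) + 1 = b - p + 1 + 1 by ring, c']; exact h1
  · have hout : cell m l (b - p + 1) b ∉ θ := fun h => h5 ⟨h, c⟩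
    have n1 : (p : ZMod (m + l)) ≠ con m l (cell m l a₀ b₀) := by
      intro e
      obtain ⟨k, hk⟩ := con_eq (m := m) (l := l) (a := b - p) (b := b) (c := a₀) (d := b₀) (by
        rw [← con_cell a₀, ← e]; congr 1; ring)
      have hk' := cell_shift hk 1 0
      rw [add_zero, add_zero] at hk'
      rw [hk] at h3 h4'
      rw [hk'] at hout
      rcases lt_trichotomy k 0 with h6 | h6 | h6
      · exact hout (hF.mem hx (by omega) (by omega))
      · exact h4' (by rw [h6]; simp)
      · exact h1 (hF.mem h3 (by omega) (by omega))
    have n2 : (p : ZMod (m + l)) ≠ con m l (cell m l a₀ b₀) + 1 := by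
      intro e
      obtain ⟨k, hk⟩ := con_eq (m := m) (l := l) (a := b - p + 1) (b := b) (c := a₀) (d := b₀) (by
        rw [← con_cell a₀, ← sub_eq_iff_eq_add.2 e]; push_cast; ring)
      have hk' := cell_shift hk (-1) 0
      rw [add_neg_cancel_right, add_zero] at hk'
      rw [hk] at hout
      rw [hk'] at h3
      by_cases h6 : k ≤ 0
      · exact hout (hF.mem hx (by omega) (by omega))
      · exact h2 (hF.mem h3 (by omega) (by omega))
    rw [tr, if_neg n1, if_neg n2]
    exact ⟨h3, hout⟩

lemma row_step (hκ : 1 < m + l) (hF : Filt θ) {a₀ b₀ : ℤ} (hx : cell m l a₀ b₀ ∈ θ)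
    (h1 : cell m l (a₀ + 1) b₀ ∉ θ) (h2 : cell m l a₀ (b₀ + 1) ∉ θ) {a q : ℤ}
    (h : IsRow (θ \ {cell m l a₀ b₀}) a q) : IsRow θ a (tr (con m l (cell m l a₀ b₀)) q) := by
  have : Fact (1 < m + l) := ⟨hκ⟩
  obtain ⟨⟨h3, h4⟩, h5⟩ := h
  have h4' : cell m l a (a + q - 1) ≠ cell m l a₀ b₀ := h4
  by_cases c : cell m l a (a + q) = cell m l a₀ b₀
  · have e : (q : ZMod (m + l)) = con m l (cell m l a₀ b₀) := by
      rw [← c, con_cell]; push_cast; ring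
    have ht : tr (con m l (cell m l a₀ b₀)) q = q + 1 := by
      rw [tr, if_pos e]
    rw [ht]
    have c' := cell_shift c 0 1
    rw [add_zero, add_zero] at c'
    refine ⟨?_, ?_⟩
    · rw [show a + (q + 1) - 1 = a + q by ring, c]; exact hx
    · rw [show a + (q + 1) = a + q + 1 by ring, c']; exact h2
  · have hout : cell m l a (a + q) ∉ θ := fun h => h5 ⟨h, c⟩
    have n1 : (q : ZMod (m + l)) ≠ con m l (cell m l a₀ b₀) := by
      intro e
      obtain ⟨k, hk⟩ := con_eq (m := m) (l := l) (a := a) (b := a + q) (c := a₀) (d := b₀) (by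
        rw [← con_cell a₀, ← e]; congr 1; ring)
      have hk' := cell_shift hk 0 (-1)
      rw [add_zero, ← sub_eq_add_neg] at hk'
      rw [hk] at hout
      rw [hk'] at h3
      by_cases h6 : k ≤ 0
      · exact hout (hF.mem hx (by omega) (by omega))
      · exact h1 (hF.mem h3 (by omega) (by omega))
    have n2 : (q : ZMod (m + l)) ≠ con m l (cell m l a₀ b₀) + 1 := by
      intro e
      obtain ⟨k, hk⟩ := con_eq (m := m) (l := l) (a := a) (b := a + q - 1) (c := a₀) (d := b₀) (by
        rw [← con_cell a₀, ← sub_eq_iff_eq_add.2 e]; push_cast; ring)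
      have hk' := cell_shift hk 0 1
      rw [sub_add_cancel, add_zero] at hk'
      rw [hk] at h3 h4'
      rw [hk'] at hout
      rcases lt_trichotomy k 0 with h6 | h6 | h6
      · exact hout (hF.mem hx (by omega) (by omega))
      · exact h4' (by rw [h6]; simp)
      · exact h1 (hF.mem h3 (by omega) (by omega))
    rw [tr, if_neg n1, if_neg n2]
    exact ⟨h3, hout⟩

/-! ### Hooks -/

lemma sum_alpha_up (s : ℤ) (N : ℕ) :
    ∑ k ∈ Finset.range N, alphaR (m + l) ((s + k : ℤ) : ZMod (m + l)) = rt (m + l) s (s + N) := by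
  induction N with
  | zero => simp [rt]
  | succ N ih =>
    rw [Finset.sum_range_succ, ih, alpha_eq_rt, rt, rt, rt]
    push_cast
    rw [add_assoc]
    abel

lemma sum_alpha_down (s : ℤ) (N : ℕ) :
    ∑ k ∈ Finset.range N, alphaR (m + l) ((s - (k + 1) : ℤ) : ZMod (m + l)) =
      rt (m + l) (s - N) s := by
  induction N with
  | zero => simp [rt]
  | succ N ih =>
    rw [Finset.sum_range_succ, ih, alpha_eq_rt, rt, rt, rt]
    push_cast
    rw [show s - ((N : ℤ) + 1) + 1 = s - N by ring]
    abel

lemma arm_sum (hm : 1 ≤ m) (hF : Filt θ) {a b q : ℤ} (hq : IsRow θ a q)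
    (hx : cell m l a b ∈ θ) :
    alC m l (cell m l a b) + ∑ᶠ y ∈ armSet m l θ (cell m l a b), alC m l y
      = rt (m + l) (b - a) q := by
  have hx' := (row_mem hF hq b).1 hx
  have hset : armSet m l θ (cell m l a b) = (fun k : ℕ => cell m l a (b + (k + 1))) ''
      (Finset.range (q - (b - a + 1)).toNat : Set ℕ) := by
    ext y
    simp only [armSet, Set.mem_ofPred_eq, Set.mem_image, Finset.coe_range, Set.mem_Iio, cell_add,
      add_zero]
    constructor
    · rintro ⟨hy, k, hk, rfl⟩
      rw [row_mem hF hq] at hy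
      exact ⟨k - 1, by omega, by rw [show ((k - 1 : ℕ) : ℤ) + 1 = k by omega]⟩
    · rintro ⟨k, hk, rfl⟩
      exact ⟨(row_mem hF hq _).2 (by omega), k + 1, by omega, by push_cast; rfl⟩
  have hinj : Function.Injective (fun k : ℕ => cell m l a (b + (k + 1))) := by
    intro k k' h
    obtain ⟨n, h1, h2⟩ := cell_eq.1 h
    have : n = 0 := by
      have hm' : (m : ℤ) ≠ 0 := by exact_mod_cast (by omega : m ≠ 0)
      have : n * (m : ℤ) = 0 := by linarith
      exact (mul_eq_zero.1 this).resolve_right hm'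
    rw [this] at h2
    omega
  rw [hset, finsum_mem_image hinj.injOn, finsum_mem_coe_finset]
  have e : ∀ k ∈ Finset.range (q - (b - a + 1)).toNat, alC m l (cell m l a (b + (k + 1))) =
      alphaR (m + l) (((b - a + 1) + k : ℤ) : ZMod (m + l)) := by
    intro k _
    rw [alC, con_cell]; congr 2; ring
  rw [Finset.sum_congr rfl e, sum_alpha_up, alC, con_cell, alpha_eq_rt,
    show b - a + 1 + ((q - (b - a + 1)).toNat : ℤ) = q by omega, rt, rt, rt]
  abel

lemma leg_sum (hl : 1 ≤ l) (hF : Filt θ) {a b p : ℤ} (hp : IsCol θ b p)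
    (hx : cell m l a b ∈ θ) :
    alC m l (cell m l a b) + ∑ᶠ y ∈ legSet m l θ (cell m l a b), alC m l y
      = rt (m + l) p (b - a + 1) := by
  have hx' := (col_mem hF hp a).1 hx
  have hset : legSet m l θ (cell m l a b) = (fun k : ℕ => cell m l (a + (k + 1)) b) ''
      (Finset.range ((b - a) - p).toNat : Set ℕ) := by
    ext y
    simp only [legSet, Set.mem_ofPred_eq, Set.mem_image, Finset.coe_range, Set.mem_Iio, cell_add,
      add_zero]
    constructor
    · rintro ⟨hy, k, hk, rfl⟩
      rw [col_mem hF hp] at hy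
      exact ⟨k - 1, by omega, by rw [show ((k - 1 : ℕ) : ℤ) + 1 = k by omega]⟩
    · rintro ⟨k, hk, rfl⟩
      exact ⟨(col_mem hF hp _).2 (by omega), k + 1, by omega, by push_cast; rfl⟩
  have hinj : Function.Injective (fun k : ℕ => cell m l (a + (k + 1)) b) := by
    intro k k' h
    obtain ⟨n, h1, h2⟩ := cell_eq.1 h
    have : n = 0 := by
      have hl' : (l : ℤ) ≠ 0 := by exact_mod_cast (by omega : l ≠ 0)
      have : n * (l : ℤ) = 0 := by linarith
      exact (mul_eq_zero.1 this).resolve_right hl'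
    rw [this] at h1
    omega
  rw [hset, finsum_mem_image hinj.injOn, finsum_mem_coe_finset]
  have e : ∀ k ∈ Finset.range ((b - a) - p).toNat, alC m l (cell m l (a + (k + 1)) b) =
      alphaR (m + l) (((b - a) - (k + 1) : ℤ) : ZMod (m + l)) := by
    intro k _
    rw [alC, con_cell]; congr 2; ring
  rw [Finset.sum_congr rfl e, sum_alpha_down, alC, con_cell, alpha_eq_rt,
    show b - a - ((b - a - p).toNat : ℤ) = p by omega, rt, rt, rt]
  abel

/-- The hook of a cell is the root whose ends are the boundary edges of its column and row. -/
lemma hk_cell (hm : 1 ≤ m) (hl : 1 ≤ l) (hF : Filt θ) {a b p q : ℤ} (hp : IsCol θ b p)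
    (hq : IsRow θ a q) (hx : cell m l a b ∈ θ) : hk m l θ (cell m l a b) = rt (m + l) p q := by
  have h1 := arm_sum hm hF hq hx
  have h2 := leg_sum hl hF hp hx
  have h3 : alC m l (cell m l a b) = rt (m + l) (b - a) (b - a + 1) := by
    rw [alC, con_cell, alpha_eq_rt]
  rw [hk, h1, eq_sub_of_add_eq' h2, h3]
  simp only [rt]
  abel

/-! ### The bottom set and the order `⊴` -/

lemma isBottom_iff (hm : 1 ≤ m) (hF : Filt θ) (a b : ℤ) :
    cell m l a b ∈ btm m l θ ↔ cell m l a b ∈ θ ∧ cell m l (a + 1) (b + 1) ∉ θ := by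
  constructor
  · rintro ⟨i, h1, h2, h3⟩
    refine ⟨h1, fun h => ?_⟩
    have := h3 _ h (by rw [← h2, con_cell, con_cell]; congr 1; ring)
    obtain ⟨n, h4, h5⟩ := cle_cell.1 this
    have hm' : (1 : ℤ) ≤ m := by exact_mod_cast hm
    have hl' : (0 : ℤ) ≤ l := Int.natCast_nonneg _
    have : n < 0 := by nlinarith
    nlinarith
  · rintro ⟨h1, h2⟩
    refine ⟨_, h1, rfl, fun y hy hc => ?_⟩
    obtain ⟨c, d, rfl⟩ := exists_cell y
    obtain ⟨k, hk⟩ := con_eq (m := m) (l := l) hc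
    rw [hk] at hy ⊢
    by_cases hk0 : k ≤ 0
    · exact cle_of_le (by omega) (by omega)
    · exact absurd (hF.mem hy (by omega) (by omega)) h2

lemma cell_ne (hκ : 1 < m + l) {a b c d : ℤ} (h : d - c = b - a + 1) :
    cell m l a b ≠ cell m l c d := by
  intro e
  have := congrArg (con m l) e
  rw [con_cell, con_cell, h] at this
  exact cast_ne_succ hκ _ this

lemma btmMax_iff (hm : 1 ≤ m) (hκ : 1 < m + l) (hF : Filt θ) (a b : ℤ)
    (hb : cell m l a b ∈ btm m l θ) :
    cell m l a b ∈ btmMax m l θ ↔ cell m l (a + 1) b ∈ θ ∧ cell m l a (b + 1) ∈ θ := by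
  have hb' := (isBottom_iff hm hF a b).1 hb
  constructor
  · rintro ⟨-, h2⟩
    constructor
    · by_contra hc
      have := h2 (cell m l a (b - 1)) ((isBottom_iff hm hF _ _).2
        ⟨hF.mem hb'.1 le_rfl (by omega), by rwa [sub_add_cancel]⟩) (cle_of_le le_rfl (by omega))
      exact cell_ne hκ (by ring) this
    · by_contra hc
      have := h2 (cell m l (a - 1) b) ((isBottom_iff hm hF _ _).2
        ⟨hF.mem hb'.1 (by omega) le_rfl, by rwa [sub_add_cancel]⟩) (cle_of_le (by omega) le_rfl)
      exact cell_ne hκ (by ring) this.symm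
  · rintro ⟨h1, h2⟩
    refine ⟨hb, fun y hy hle => ?_⟩
    obtain ⟨c, d, rfl, hc, hd⟩ := cle_lift hle
    have hy' := ((isBottom_iff hm hF _ _).1 hy).2
    have e1 : c = a := by
      by_contra hne
      exact hy' (hF.mem h2 (by omega) (by omega))
    have e2 : d = b := by
      by_contra hne
      exact hy' (hF.mem h1 (by omega) (by omega))
    rw [e1, e2]

lemma btmMin_iff (hm : 1 ≤ m) (hκ : 1 < m + l) (hF : Filt θ) (a b : ℤ)
    (hb : cell m l a b ∈ btm m l θ) :
    cell m l a b ∈ btmMin m l θ ↔ cell m l (a + 1) b ∉ θ ∧ cell m l a (b + 1) ∉ θ := by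
  have hb' := (isBottom_iff hm hF a b).1 hb
  constructor
  · rintro ⟨-, h2⟩
    constructor
    · intro hc
      have := h2 (cell m l (a + 1) b) ((isBottom_iff hm hF _ _).2
        ⟨hc, fun h => hb'.2 (hF.mem h (by omega) (by omega))⟩) (cle_of_le (by omega) le_rfl)
      exact cell_ne hκ (by ring) this
    · intro hc
      have := h2 (cell m l a (b + 1)) ((isBottom_iff hm hF _ _).2
        ⟨hc, fun h => hb'.2 (hF.mem h (by omega) (by omega))⟩) (cle_of_le le_rfl (by omega))
      exact cell_ne hκ (by ring) this.symm
  · rintro ⟨h1, h2⟩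
    refine ⟨hb, fun y hy hle => ?_⟩
    obtain ⟨c, d, rfl, hc, hd⟩ := cle_lift' hle
    have hy' := ((isBottom_iff hm hF _ _).1 hy).1
    have e1 : c = a := by
      by_contra hne
      exact h1 (hF.mem hy' (by omega) (by omega))
    have e2 : d = b := by
      by_contra hne
      exact h2 (hF.mem hy' (by omega) (by omega))
    rw [e1, e2]

/-- Roots joining consecutive column edges belong to `Π_θ`. -/
lemma col_mem_Pi (hm : 1 ≤ m) (hl : 1 ≤ l) (hF : Filt θ) {b p p' : ℤ} (h : IsCol θ b p)
    (h' : IsCol θ (b - 1) p') : rt (m + l) p' p ∈ PiTheta m l θ := by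
  have hκ : 1 < m + l := by omega
  -- the bottom cell to the left of the lowest cell of column `b`
  have hz : cell m l (b - p) (b - 1) ∈ btm m l θ := (isBottom_iff hm hF _ _).2
    ⟨hF.mem h.1 le_rfl (by omega), by rw [sub_add_cancel]; exact h.2⟩
  have hz1 : cell m l (b - p) (b - 1 + 1) ∈ θ := by rw [sub_add_cancel]; exact h.1
  by_cases c : cell m l (b - p + 1) (b - 1) ∈ θ
  · right
    refine ⟨_, (btmMax_iff hm hκ hF _ _ hz).2 ⟨c, hz1⟩, ?_⟩
    rw [leg_sum hl hF h' ((isBottom_iff hm hF _ _).1 hz).1]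
    congr 1; ring
  · left; left
    have e : p' = p - 1 := by
      have h1 := (col_mem hF h' (b - p)).1 (hF.mem h.1 le_rfl (by omega))
      rw [col_mem hF h'] at c
      omega
    refine ⟨_, hz, fun h => c ((btmMax_iff hm hκ hF _ _ hz).1 h).1,
      fun h => ((btmMin_iff hm hκ hF _ _ hz).1 h).2 hz1, ?_⟩
    rw [alC, con_cell, alpha_eq_rt, e]
    congr 1 <;> ring

/-- Roots joining consecutive row edges belong to `Π_θ`. -/
lemma row_mem_Pi (hm : 1 ≤ m) (hl : 1 ≤ l) (hF : Filt θ) {a q q' : ℤ} (h : IsRow θ a q)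
    (h' : IsRow θ (a - 1) q') : rt (m + l) q q' ∈ PiTheta m l θ := by
  have hκ : 1 < m + l := by omega
  have hz : cell m l (a - 1) (a + q - 1) ∈ btm m l θ := (isBottom_iff hm hF _ _).2
    ⟨hF.mem h.1 (by omega) le_rfl, by rw [sub_add_cancel, sub_add_cancel]; exact h.2⟩
  have hz1 : cell m l (a - 1 + 1) (a + q - 1) ∈ θ := by rw [sub_add_cancel]; exact h.1
  by_cases c : cell m l (a - 1) (a + q - 1 + 1) ∈ θ
  · left; right
    refine ⟨_, (btmMax_iff hm hκ hF _ _ hz).2 ⟨hz1, c⟩, ?_⟩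
    rw [arm_sum hm hF h' ((isBottom_iff hm hF _ _).1 hz).1]
    congr 1; ring
  · left; left
    have e : q' = q + 1 := by
      have h1 := (row_mem hF h' (a + q - 1)).1 (hF.mem h.1 (by omega) le_rfl)
      rw [row_mem hF h'] at c
      omega
    refine ⟨_, hz, fun h => c ((btmMax_iff hm hκ hF _ _ hz).1 h).2,
      fun h => ((btmMin_iff hm hκ hF _ _ hz).1 h).1 hz1, ?_⟩
    rw [alC, con_cell, alpha_eq_rt, e]
    congr 1 <;> ring

/-- Every element of `Π_θ` joins two column edges, or two row edges, in increasing order. -/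
lemma Pi_form (hm : 1 ≤ m) (hl : 1 ≤ l) (hθ : IsCylindric m l θ) {v : Hw (m + l)}
    (hv : v ∈ PiTheta m l θ) :
    ∃ r s : ℤ, r < s ∧ v = rt (m + l) r s ∧
      ((∃ b b', IsCol θ b r ∧ IsCol θ b' s) ∨ (∃ a a', IsRow θ a r ∧ IsRow θ a' s)) := by
  have hκ : 1 < m + l := by omega
  have hF : Filt θ := hθ.2.2
  rcases hv with (⟨x, hx, h1, h2, rfl⟩ | ⟨x, hx, rfl⟩) | ⟨x, hx, rfl⟩
  · obtain ⟨a, b, rfl⟩ := exists_cell x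
    rw [btmMax_iff hm hκ hF _ _ hx] at h1
    rw [btmMin_iff hm hκ hF _ _ hx] at h2
    obtain ⟨h3, h4⟩ := (isBottom_iff hm hF _ _).1 hx
    refine ⟨b - a, b - a + 1, by omega, by rw [alC, con_cell, alpha_eq_rt], ?_⟩
    by_cases c : cell m l (a + 1) b ∈ θ
    · right
      have c' : cell m l a (b + 1) ∉ θ := fun h => h1 ⟨c, h⟩
      exact ⟨a + 1, a,
        ⟨by rwa [show a + 1 + (b - a) - 1 = b by ring],
          by rwa [show a + 1 + (b - a) = b + 1 by ring]⟩,
        ⟨by rwa [show a + (b - a + 1) - 1 = b by ring],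
          by rwa [show a + (b - a + 1) = b + 1 by ring]⟩⟩
    · left
      have c' : cell m l a (b + 1) ∈ θ := by
        by_contra h
        exact h2 ⟨c, h⟩
      exact ⟨b, b + 1,
        ⟨by rwa [show b - (b - a) = a by ring], by rwa [show b - (b - a) = a by ring]⟩,
        ⟨by rwa [show b + 1 - (b - a + 1) = a by ring],
          by rwa [show b + 1 - (b - a + 1) = a by ring]⟩⟩
  · obtain ⟨a, b, rfl⟩ := exists_cell x
    obtain ⟨c, c'⟩ := (btmMax_iff hm hκ hF _ _ hx.1).1 hx
    obtain ⟨h3, h4⟩ := (isBottom_iff hm hF _ _).1 hx.1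
    obtain ⟨q, hq⟩ := exists_row hm hθ a
    refine ⟨b - a, q, (row_mem hF hq b).1 h3, arm_sum hm hF hq h3, Or.inr ⟨a + 1, a, ⟨?_, ?_⟩, hq⟩⟩
    · rwa [show a + 1 + (b - a) - 1 = b by ring]
    · rwa [show a + 1 + (b - a) = b + 1 by ring]
  · obtain ⟨a, b, rfl⟩ := exists_cell x
    obtain ⟨c, c'⟩ := (btmMax_iff hm hκ hF _ _ hx.1).1 hx
    obtain ⟨h3, h4⟩ := (isBottom_iff hm hF _ _).1 hx.1
    obtain ⟨p, hp⟩ := exists_col hl hθ b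
    have := (col_mem hF hp a).1 h3
    refine ⟨p, b - a + 1, by omega, leg_sum hl hF hp h3, Or.inl ⟨b, b + 1, hp, ⟨?_, ?_⟩⟩⟩
    · rwa [show b + 1 - (b - a + 1) = a by ring]
    · rwa [show b + 1 - (b - a + 1) = a by ring]

lemma col_closure (hm : 1 ≤ m) (hl : 1 ≤ l) (hθ : IsCylindric m l θ) (k : ℕ) :
    ∀ {b p p' : ℤ}, IsCol θ b p → IsCol θ (b - k) p' →
      rt (m + l) p' p ∈ AddSubmonoid.closure (PiTheta m l θ) := by
  have hF : Filt θ := hθ.2.2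
  induction k with
  | zero =>
    intro b p p' h h'
    have : p' = p := by
      rw [Nat.cast_zero, sub_zero] at h'
      have h1 := (col_mem hF h' _).1 h.1
      have h2 := (col_mem hF h _).1 h'.1
      omega
    rw [this, rt, sub_self]
    exact zero_mem _
  | succ k ih =>
    intro b p p' h h'
    obtain ⟨r, hr⟩ := exists_col hl hθ (b - 1)
    have h1 := ih hr (p' := p') (by
      rw [show b - 1 - (k : ℤ) = b - ((k + 1 : ℕ) : ℤ) by push_cast; ring]; exact h')
    have h2 := AddSubmonoid.subset_closure (col_mem_Pi hm hl hF h hr)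
    have := add_mem h1 h2
    rwa [show rt (m + l) p' r + rt (m + l) r p = rt (m + l) p' p by simp [rt]] at this

lemma row_closure (hm : 1 ≤ m) (hl : 1 ≤ l) (hθ : IsCylindric m l θ) (k : ℕ) :
    ∀ {a q q' : ℤ}, IsRow θ a q → IsRow θ (a - k) q' →
      rt (m + l) q q' ∈ AddSubmonoid.closure (PiTheta m l θ) := by
  have hF : Filt θ := hθ.2.2
  induction k with
  | zero =>
    intro b p p' h h'
    have : p' = p := by
      rw [Nat.cast_zero, sub_zero] at h'
      have h1 := (row_mem hF h' _).1 h.1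
      have h2 := (row_mem hF h _).1 h'.1
      omega
    rw [this, rt, sub_self]
    exact zero_mem _
  | succ k ih =>
    intro a q q' h h'
    obtain ⟨r, hr⟩ := exists_row hm hθ (a - 1)
    have h1 := ih hr (q' := q') (by
      rw [show a - 1 - (k : ℤ) = a - ((k + 1 : ℕ) : ℤ) by push_cast; ring]; exact h')
    have h2 := AddSubmonoid.subset_closure (row_mem_Pi hm hl hF h hr)
    have := add_mem h2 h1
    rwa [show rt (m + l) q r + rt (m + l) r q' = rt (m + l) q q' by simp [rt]] at this

lemma trile_of_cle (hm : 1 ≤ m) (hl : 1 ≤ l) (hθ : IsCylindric m l θ) {x y : Cyl m l}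
    (hx : x ∈ θ) (hy : y ∈ θ) (h : cle m l x y) : trile m l θ (hk m l θ x) (hk m l θ y) := by
  have hF : Filt θ := hθ.2.2
  obtain ⟨a, b, rfl⟩ := exists_cell x
  obtain ⟨c, d, rfl, hc, hd⟩ := cle_lift h
  obtain ⟨p, hp⟩ := exists_col hl hθ b
  obtain ⟨q, hq⟩ := exists_row hm hθ a
  obtain ⟨p', hp'⟩ := exists_col hl hθ d
  obtain ⟨q', hq'⟩ := exists_row hm hθ c
  rw [hk_cell hm hl hF hp hq hx, hk_cell hm hl hF hp' hq' hy, trile]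
  have h1 := col_closure hm hl hθ (b - d).toNat hp (p' := p')
    (by rwa [show b - ((b - d).toNat : ℤ) = d by omega])
  have h2 := row_closure hm hl hθ (a - c).toNat hq (q' := q')
    (by rwa [show a - ((a - c).toNat : ℤ) = c by omega])
  have := add_mem h1 h2
  rwa [show rt (m + l) p' p + rt (m + l) q q' = rt (m + l) p' q' - rt (m + l) p q by
    simp only [rt]; abel] at this

/-- The order `⊴` reflects the order of cells. For given hooks, the relevant functional on roots
sends `ε_r - ε_s` to `ψ s - ψ r`, with `ψ` a step function that increases by `1` per period, whose
jumps are placed independently on column edges and on row edges. -/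
lemma cle_of_trile (hm : 1 ≤ m) (hl : 1 ≤ l) (hθ : IsCylindric m l θ) {x y : Cyl m l}
    (hx : x ∈ θ) (hy : y ∈ θ) (h : trile m l θ (hk m l θ x) (hk m l θ y)) : cle m l x y := by
  classical
  have hF : Filt θ := hθ.2.2
  have hK := kpos (κ := m + l)
  obtain ⟨a, b, rfl⟩ := exists_cell x
  obtain ⟨p, hp⟩ := exists_col hl hθ b
  obtain ⟨q, hq⟩ := exists_row hm hθ a
  -- choose the lift of `y` whose column edge lies in the period ending at `p`
  obtain ⟨c, d, p', rfl, hp', hle, hlt⟩ : ∃ c d p', y = cell m l c d ∧ IsCol θ d p' ∧ p' ≤ p ∧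
      p < p' + (m + l : ℕ) := by
    obtain ⟨c, d, rfl⟩ := exists_cell y
    obtain ⟨p', hp'⟩ := exists_col hl hθ d
    refine ⟨c - (p - p') / (m + l : ℕ) * m, d + (p - p') / (m + l : ℕ) * l, _,
      cell_eq.2 ⟨(p - p') / (m + l : ℕ), by ring, by ring⟩, col_period hp' _, ?_, ?_⟩
    · have := Int.ediv_mul_le (p - p') hK.ne'
      linarith
    · have := Int.lt_ediv_add_one_mul_self (p - p') hK
      linarith
  obtain ⟨q', hq'⟩ := exists_row hm hθ c
  rw [hk_cell hm hl hF hp hq hx, hk_cell hm hl hF hp' hq' hy, trile] at h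
  let ψ : ℤ → ℚ := fun n => (((if ∃ b, IsCol θ b n then (n - p') / (m + l : ℕ)
    else (n - q) / (m + l : ℕ)) : ℤ) : ℚ)
  have ψc : ∀ n, (∃ b, IsCol θ b n) → ψ n = (((n - p') / (m + l : ℕ) : ℤ) : ℚ) := fun n hn => by
    show (((if _ then _ else _) : ℤ) : ℚ) = _
    rw [if_pos hn]
  have ψr : ∀ n, (∃ a, IsRow θ a n) → ψ n = (((n - q) / (m + l : ℕ) : ℤ) : ℚ) := fun n hn => by
    show (((if _ then _ else _) : ℤ) : ℚ) = _
    rw [if_neg]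
    rintro ⟨b, hb⟩
    obtain ⟨a, ha⟩ := hn
    exact col_row_ne hF hb ha rfl
  have hper : ∀ n, ψ (n + (m + l : ℕ)) = ψ n + 1 := by
    intro n
    have hiff := exists_col_period (θ := θ) n
    show (((if _ then _ else _) : ℤ) : ℚ) = (((if _ then _ else _) : ℤ) : ℚ) + 1
    simp only [hiff]
    have hdiv : ∀ t : ℤ, (n + (m + l : ℕ) - t) / ((m + l : ℕ) : ℤ) = (n - t) / (m + l : ℕ) + 1 := by
      intro t
      rw [show n + (m + l : ℕ) - t = (n - t) + (m + l : ℕ) * 1 by ring,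
        Int.add_mul_ediv_left _ _ hK.ne']
    split_ifs <;> rw [hdiv] <;> push_cast <;> rfl
  obtain ⟨φ, hφ⟩ := exists_functional ψ 1 hper
  have hpos : ∀ v ∈ AddSubmonoid.closure (PiTheta m l θ), 0 ≤ φ v := by
    intro v hv
    induction hv using AddSubmonoid.closure_induction with
    | mem v hv =>
      obtain ⟨r, s, hrs, rfl, ⟨b, b', h1, h2⟩ | ⟨b, b', h1, h2⟩⟩ := Pi_form hm hl hθ hv
      · rw [hφ, ψc r ⟨_, h1⟩, ψc s ⟨_, h2⟩, sub_nonneg, Int.cast_le]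
        exact Int.ediv_le_ediv hK (by omega)
      · rw [hφ, ψr r ⟨_, h1⟩, ψr s ⟨_, h2⟩, sub_nonneg, Int.cast_le]
        exact Int.ediv_le_ediv hK (by omega)
    | zero => rw [map_zero]
    | add v w _ _ hv hw => rw [map_add]; exact add_nonneg hv hw
  have h0 := hpos _ h
  rw [map_sub, hφ, hφ, ψr q' ⟨_, hq'⟩, ψr q ⟨_, hq⟩, ψc p ⟨_, hp⟩, ψc p' ⟨_, hp'⟩, sub_self,
    sub_self, Int.zero_ediv, Int.ediv_eq_zero_of_lt (a := p - p') (by omega) (by omega)] at h0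
  have h1 : 0 ≤ (q' - q) / ((m + l : ℕ) : ℤ) := by
    simpa using h0
  have h2 : q ≤ q' := by
    have := (Int.le_ediv_iff_mul_le hK).1 h1
    omega
  refine cle_of_le ?_ ?_
  · by_contra hc
    have := row_le hF hq hq' (by omega)
    omega
  · by_contra hc
    have := col_le hF hp' hp (by omega)
    omega

lemma hk_injOn (hm : 1 ≤ m) (hl : 1 ≤ l) (hθ : IsCylindric m l θ) :
    Set.InjOn (hk m l θ) θ := by
  intro x hx y hy h
  have h0 : ∀ x y, hk m l θ x = hk m l θ y → trile m l θ (hk m l θ x) (hk m l θ y) := by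
    intro x y h
    rw [trile, h, sub_self]
    exact zero_mem _
  exact cle_antisymm hm hl (cle_of_trile hm hl hθ hx hy (h0 _ _ h))
    (cle_of_trile hm hl hθ hy hx (h0 _ _ h.symm))

/-- A root joining two column edges, or two row edges, is not a hook. -/
lemma not_hook (hm : 1 ≤ m) (hl : 1 ≤ l) (hθ : IsCylindric m l θ) {r s : ℤ}
    (h : (∃ b b', IsCol θ b r ∧ IsCol θ b' s) ∨ (∃ a a', IsRow θ a r ∧ IsRow θ a' s)) :
    rt (m + l) r s ∉ RwTheta m l θ := by
  classical
  have hF : Filt θ := hθ.2.2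
  rintro ⟨x, hx, he⟩
  obtain ⟨a, b, rfl⟩ := exists_cell x
  obtain ⟨p, hp⟩ := exists_col hl hθ b
  obtain ⟨q, hq⟩ := exists_row hm hθ a
  rw [hk_cell hm hl hF hp hq hx] at he
  let ψ : ℤ → ℚ := fun n => if ∃ b, IsCol θ b n then 1 else 0
  have ψc : ∀ n, (∃ b, IsCol θ b n) → ψ n = 1 := fun n hn => if_pos hn
  have ψr : ∀ n, (∃ a, IsRow θ a n) → ψ n = 0 := by
    rintro n ⟨a, ha⟩
    refine if_neg ?_
    rintro ⟨b, hb⟩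
    exact col_row_ne hF hb ha rfl
  have hper : ∀ n, ψ (n + (m + l : ℕ)) = ψ n + 0 := by
    intro n
    have hiff := exists_col_period (θ := θ) n
    simp only [ψ, hiff, add_zero]
  obtain ⟨φ, hφ⟩ := exists_functional ψ 0 hper
  have e := congrArg φ he
  rw [hφ, hφ, ψc p ⟨_, hp⟩, ψr q ⟨_, hq⟩] at e
  rcases h with ⟨b, b', h1, h2⟩ | ⟨b, b', h1, h2⟩
  · rw [ψc r ⟨_, h1⟩, ψc s ⟨_, h2⟩] at e
    norm_num at e
  · rw [ψr r ⟨_, h1⟩, ψr s ⟨_, h2⟩] at e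
    norm_num at e

end Geometry

/-! ### Ideals built cell by cell -/

section Ideals

variable {m l : ℕ}

/-- `Good θ ξ L`: the finite order ideal `ξ` of `θ` is obtained from `∅` by successively adding
minimal cells of the complement, the contents of which form the word `L`. -/
inductive Good (θ : Set (Cyl m l)) : Set (Cyl m l) → List (ZMod (m + l)) → Prop
  | nil : Good θ ∅ []
  | snoc {ξ : Set (Cyl m l)} {L : List (ZMod (m + l))} {a b : ℤ} (h : Good θ ξ L)
      (hx : cell m l a b ∈ θ) (hn : cell m l a b ∉ ξ) (h1 : cell m l (a + 1) b ∉ θ \ ξ)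
      (h2 : cell m l a (b + 1) ∉ θ \ ξ) :
      Good θ (insert (cell m l a b) ξ) (L ++ [con m l (cell m l a b)])

variable [NeZero (m + l)] {θ ξ : Set (Cyl m l)} {L : List (ZMod (m + l))}

lemma Good.subset (h : Good θ ξ L) : ξ ⊆ θ := by
  induction h with
  | nil => exact Set.empty_subset _
  | snoc h hx hn h1 h2 ih => exact Set.insert_subset hx ih

lemma Good.finite (h : Good θ ξ L) : ξ.Finite := by
  induction h with
  | nil => exact Set.finite_empty
  | snoc h hx hn h1 h2 ih => exact ih.insert _

lemma diff_insert (x : Cyl m l) : θ \ insert x ξ = (θ \ ξ) \ {x} := by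
  ext y
  simp only [Set.mem_sdiff, Set.mem_insert_iff, Set.mem_singleton_iff]
  tauto

lemma Good.filt (hF : Filt θ) (h : Good θ ξ L) : Filt (θ \ ξ) := by
  induction h with
  | nil => rwa [Set.sdiff_empty]
  | @snoc ξ L a b h hx hn h1 h2 ih =>
    rw [diff_insert]
    rintro y ⟨hy, hne⟩ z hz
    refine ⟨ih y hy z hz, ?_⟩
    rintro rfl
    obtain ⟨c, d, rfl, hc, hd⟩ := cle_lift' hz
    rcases hc.eq_or_lt with rfl | hc
    · rcases hd.eq_or_lt with rfl | hd
      · exact hne rfl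
      · exact h2 (ih.mem hy le_rfl (by omega))
    · exact h1 (ih.mem hy (by omega) hd)

/-- The affine permutation of the word of `ξ` sends the column edges of `θ \ ξ` to those
of `θ`. -/
lemma Good.col (hκ : 1 < m + l) (hF : Filt θ) (h : Good θ ξ L) :
    ∀ {b p : ℤ}, IsCol (θ \ ξ) b p → IsCol θ b (perm L p) := by
  induction h with
  | nil => intro b p hp; rwa [Set.sdiff_empty] at hp
  | snoc h hx hn h1 h2 ih =>
    intro b p hp
    rw [diff_insert] at hp
    rw [perm_append]
    exact ih (col_step hκ (h.filt hF) ⟨hx, hn⟩ h1 h2 hp)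

lemma Good.row (hκ : 1 < m + l) (hF : Filt θ) (h : Good θ ξ L) :
    ∀ {a q : ℤ}, IsRow (θ \ ξ) a q → IsRow θ a (perm L q) := by
  induction h with
  | nil => intro b p hp; rwa [Set.sdiff_empty] at hp
  | snoc h hx hn h1 h2 ih =>
    intro b p hp
    rw [diff_insert] at hp
    rw [perm_append]
    exact ih (row_step hκ (h.filt hF) ⟨hx, hn⟩ h1 h2 hp)

/-- Adding a minimal cell is an ascent of the affine permutation, and the new inversion is the
hook of that cell. -/
lemma Good.step (hm : 1 ≤ m) (hl : 1 ≤ l) (hF : Filt θ) (h : Good θ ξ L) {a b : ℤ}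
    (hx : cell m l a b ∈ θ) (hn : cell m l a b ∉ ξ) (h1 : cell m l (a + 1) b ∉ θ \ ξ)
    (h2 : cell m l a (b + 1) ∉ θ \ ξ) :
    perm L (b - a) < perm L (b - a + 1) ∧
      rt (m + l) (perm L (b - a)) (perm L (b - a + 1)) = hk m l θ (cell m l a b) := by
  have hκ : 1 < m + l := by omega
  have hp : IsCol θ b (perm L (b - a)) := h.col hκ hF
    ⟨by rw [show b - (b - a) = a by ring]; exact ⟨hx, hn⟩,
      by rw [show b - (b - a) = a by ring]; exact h1⟩
  have hq : IsRow θ a (perm L (b - a + 1)) := h.row hκ hF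
    ⟨by rw [show a + (b - a + 1) - 1 = b by ring]; exact ⟨hx, hn⟩,
      by rw [show a + (b - a + 1) = b + 1 by ring]; exact h2⟩
  have e1 := (col_mem hF hp a).1 hx
  have e2 := (row_mem hF hq b).1 hx
  exact ⟨by omega, (hk_cell hm hl hF hp hq hx).symm⟩

lemma Good.invSet (hm : 1 ≤ m) (hl : 1 ≤ l) (hF : Filt θ) (h : Good θ ξ L) :
    invSet (m + l) (wordProd (m + l) L) = hk m l θ '' ξ := by
  induction h with
  | nil => rw [invSet_nil (by omega), Set.image_empty]
  | snoc h hx hn h1 h2 ih =>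
    obtain ⟨e1, e2⟩ := h.step hm hl hF hx hn h1 h2
    rw [con_cell, invSet_concat (by omega) _ _ e1, e2, ih, Set.image_insert_eq]

lemma Good.wble_step (hm : 1 ≤ m) (hl : 1 ≤ l) (hF : Filt θ) (h : Good θ ξ L) {a b : ℤ}
    (hx : cell m l a b ∈ θ) (hn : cell m l a b ∉ ξ) (h1 : cell m l (a + 1) b ∉ θ \ ξ)
    (h2 : cell m l a (b + 1) ∉ θ \ ξ) :
    wble (m + l) (wordProd (m + l) L) (wordProd (m + l) (L ++ [con m l (cell m l a b)])) := by
  refine Relation.ReflTransGen.single ⟨_, wordProd_concat _ _, ?_⟩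
  rw [con_cell]
  exact len_ascent (by omega) _ _ (h.step hm hl hF hx hn h1 h2).1

/-- A good ideal can be enlarged to any larger finite ideal, moving up in the weak order. -/
lemma Good.extend (hm : 1 ≤ m) (hl : 1 ≤ l) (hF : Filt θ) {ξ' : Set (Cyl m l)} (hs : ξ' ⊆ θ)
    (hfin : ξ'.Finite) (hF' : Filt (θ \ ξ')) (k : ℕ) :
    ∀ {ξ : Set (Cyl m l)} {L : List (ZMod (m + l))}, Good θ ξ L → ξ ⊆ ξ' → (ξ' \ ξ).ncard = k →
      ∃ L', Good θ ξ' L' ∧ wble (m + l) (wordProd (m + l) L) (wordProd (m + l) L') := by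
  have hm' : (1 : ℤ) ≤ m := by exact_mod_cast hm
  have hl' : (1 : ℤ) ≤ l := by exact_mod_cast hl
  induction k with
  | zero =>
    intro ξ L h hsub hk
    rw [Set.ncard_eq_zero hfin.sdiff, Set.sdiff_eq_empty] at hk
    obtain rfl := hk.antisymm hsub
    exact ⟨L, h, Relation.ReflTransGen.refl⟩
  | succ k ih =>
    intro ξ L h hsub hk
    have hne : (ξ' \ ξ).Nonempty := Set.nonempty_of_ncard_ne_zero (by omega)
    obtain ⟨x, hx, hmax⟩ := Set.exists_max_image (ξ' \ ξ) (rank m l) hfin.sdiff hne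
    obtain ⟨a, b, rfl⟩ := exists_cell x
    have key : ∀ c d, a ≤ c → b ≤ d → rank m l (cell m l a b) < rank m l (cell m l c d) →
        cell m l c d ∉ θ \ ξ := by
      intro c d hc hd hlt hcd
      by_cases hc' : cell m l c d ∈ ξ'
      · exact absurd (hmax _ ⟨hc', hcd.2⟩) (not_le.2 hlt)
      · exact (hF'.mem ⟨hcd.1, hc'⟩ hc hd).2 hx.1
    have h1 : cell m l (a + 1) b ∉ θ \ ξ := key _ _ (by omega) le_rfl (by
      rw [rank_cell, rank_cell]; linarith)
    have h2 : cell m l a (b + 1) ∉ θ \ ξ := key _ _ le_rfl (by omega) (by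
      rw [rank_cell, rank_cell]; linarith)
    obtain ⟨L', g, w⟩ := ih (h.snoc (hs hx.1) hx.2 h1 h2) (Set.insert_subset hx.1 hsub) (by
      rw [diff_insert, Set.ncard_sdiff_singleton_of_mem hx, hk]; rfl)
    exact ⟨L', g, (h.wble_step hm hl hF (hs hx.1) hx.2 h1 h2).trans w⟩

lemma exists_good (hm : 1 ≤ m) (hl : 1 ≤ l) (hF : Filt θ) (hs : ξ ⊆ θ) (hfin : ξ.Finite)
    (hF' : Filt (θ \ ξ)) : ∃ L, Good θ ξ L ∧ wble (m + l) id (wordProd (m + l) L) :=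
  Good.extend hm hl hF hs hfin hF' _ Good.nil (Set.empty_subset _) rfl

/-! ### Tableaux and ideals -/

lemma tabWord_succ (e : ℕ → Cyl m l) (n : ℕ) :
    tabWord m l e (n + 1) = tabWord m l e n ++ [con m l (e (n + 1))] := by
  simp [tabWord, List.range_succ]

lemma image_Icc_succ (e : ℕ → Cyl m l) (n : ℕ) :
    e '' Set.Icc 1 (n + 1) = insert (e (n + 1)) (e '' Set.Icc 1 n) := by
  rw [← Set.image_insert_eq]
  congr 1
  ext i
  simp only [Set.mem_Icc, Set.mem_insert_iff]
  omega

lemma good_of_tableau (hκ : 1 < m + l) {n : ℕ} {e : ℕ → Cyl m l} (hT : IsTableauOn m l ξ n e)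
    (hs : ξ ⊆ θ) (hF' : Filt (θ \ ξ)) (k : ℕ) (hk : k ≤ n) :
    Good θ (e '' Set.Icc 1 k) (tabWord m l e k) := by
  obtain ⟨hinj, rfl, hord⟩ := hT
  induction k with
  | zero => simpa [tabWord] using Good.nil
  | succ k ih =>
    have g := ih (by omega)
    have hmem : k + 1 ∈ Set.Icc 1 n := ⟨by omega, hk⟩
    have hxS : e (k + 1) ∈ e '' Set.Icc 1 n := ⟨_, hmem, rfl⟩
    have hn : e (k + 1) ∉ e '' Set.Icc 1 k := by
      rintro ⟨i, hi, hi'⟩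
      have := hinj ⟨hi.1, by have := hi.2; omega⟩ hmem hi'
      have := hi.2
      omega
    have key : ∀ z, cle m l z (e (k + 1)) → z ≠ e (k + 1) → z ∉ θ \ e '' Set.Icc 1 k := by
      rintro z hz hne ⟨hzθ, hzk⟩
      by_cases hzS : z ∈ e '' Set.Icc 1 n
      · obtain ⟨j, hj, rfl⟩ := hzS
        have := hord _ _ hj hmem hz hne
        exact hzk ⟨j, ⟨hj.1, by omega⟩, rfl⟩
      · exact (hF' _ ⟨hzθ, hzS⟩ _ hz).2 hxS
    rw [tabWord_succ, image_Icc_succ]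
    obtain ⟨a, b, hab⟩ := exists_cell (e (k + 1))
    rw [hab] at hn key hxS ⊢
    exact g.snoc (hs hxS) hn
      (key _ (cle_of_le (by omega) le_rfl) (cell_ne hκ (by ring)))
      (key _ (cle_of_le le_rfl (by omega)) (cell_ne hκ (by ring)).symm)

lemma Good.exists_tableau (hF : Filt θ) (h : Good θ ξ L) :
    ∃ n e, IsTableauOn m l ξ n e ∧ L = tabWord m l e n := by
  induction h with
  | nil => exact ⟨0, fun _ => 0, ⟨by simp, by simp, by simp⟩, rfl⟩
  | @snoc ξ L a b h hx hn h1 h2 ih =>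
    obtain ⟨n, e, ⟨hinj, rfl, hord⟩, rfl⟩ := ih
    have hF' := h.filt hF
    set x := cell m l a b
    have hold : ∀ i ≤ n, Function.update e (n + 1) x i = e i := fun i hi =>
      Function.update_of_ne (by omega) _ _
    have hnew : Function.update e (n + 1) x (n + 1) = x := Function.update_self _ _ _
    have himg : Function.update e (n + 1) x '' Set.Icc 1 n = e '' Set.Icc 1 n :=
      Set.image_congr fun i hi => hold i hi.2
    have hsplit : ∀ i, i ∈ Set.Icc 1 (n + 1) → i ∈ Set.Icc 1 n ∨ i = n + 1 := by
      intro i hi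
      simp only [Set.mem_Icc] at hi ⊢
      omega
    refine ⟨n + 1, Function.update e (n + 1) x, ⟨?_, ?_, ?_⟩, ?_⟩
    · intro i hi j hj hij
      rcases hsplit i hi with hi | rfl <;> rcases hsplit j hj with hj | rfl
      · rw [hold i hi.2, hold j hj.2] at hij
        exact hinj hi hj hij
      · rw [hold i hi.2, hnew] at hij
        exact absurd ⟨i, hi, hij⟩ hn
      · rw [hold j hj.2, hnew] at hij
        exact absurd ⟨j, hj, hij.symm⟩ hn
      · rfl
    · rw [image_Icc_succ, himg, hnew]
    · intro i j hi hj hle hne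
      rcases hsplit i hi with hi | rfl <;> rcases hsplit j hj with hj | rfl
      · rw [hold i hi.2, hold j hj.2] at hle hne
        exact hord i j hi hj hle hne
      · have := hi.2
        omega
      · rw [hold j hj.2, hnew] at hle
        exact absurd ⟨j, hj, rfl⟩ (hF' x ⟨hx, hn⟩ _ hle).2
      · exact absurd rfl hne
    · rw [tabWord_succ, hnew]
      congr 1
      refine List.map_congr_left fun i hi => ?_
      rw [hold _ (by have := List.mem_range.1 hi; omega)]

lemma tableau_filt {e : ℕ → Cyl m l} (hF : Filt θ) (he : IsTableau m l θ e) (n : ℕ) :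
    Filt (θ \ e '' Set.Icc 1 n) := by
  obtain ⟨hinj, rfl, hord⟩ := he
  rintro y ⟨hy, hyn⟩ z hz
  refine ⟨hF y hy z hz, ?_⟩
  rintro ⟨j, hj, rfl⟩
  obtain ⟨i, hi, rfl⟩ := hy
  by_cases hij : e i = e j
  · exact hyn ⟨j, hj, hij.symm⟩
  · have := hord i j hi hj.1 hz hij
    exact hyn ⟨i, ⟨hi, by have := hj.2; omega⟩, rfl⟩

lemma tableau_good (hκ : 1 < m + l) {e : ℕ → Cyl m l} (hF : Filt θ) (he : IsTableau m l θ e)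
    (n : ℕ) : Good θ (e '' Set.Icc 1 n) (tabWord m l e n) := by
  refine good_of_tableau hκ (n := n) ⟨he.1.mono fun i hi => hi.1, rfl,
    fun a b ha hb => he.2.2 a b ha.1 hb.1⟩ ?_ (tableau_filt hF he n) n le_rfl
  rintro _ ⟨i, hi, rfl⟩
  rw [← he.2.1]
  exact ⟨i, hi.1, rfl⟩

lemma tableau_infinite {e : ℕ → Cyl m l} (he : IsTableau m l θ e) : θ.Infinite := by
  rw [← he.2.1]
  exact (Set.infinite_of_not_bddAbove (by
    rintro ⟨N, hN⟩
    have := hN (show N + 1 ∈ {a : ℕ | 1 ≤ a} by simp)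
    omega)).image he.1

/-- Proper order ideals of a cylindric diagram are finite. -/
lemma ideal_finite (hθ : IsCylindric m l θ) (hξ : IsProperIdealOf m l θ ξ) : ξ.Finite := by
  have hK := kpos (κ := m + l)
  obtain ⟨hs, hne, hid⟩ := hξ
  obtain ⟨x, hx, hxξ⟩ : ∃ x ∈ θ, x ∉ ξ := by
    by_contra hc
    push Not at hc
    exact hne (hs.antisymm hc)
  obtain ⟨z, hz⟩ := (Set.ne_univ_iff_exists_notMem θ).1 hθ.2.1
  obtain ⟨a, b, rfl⟩ := exists_cell x
  obtain ⟨c, d, rfl⟩ := exists_cell z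
  refine (((Set.finite_Icc (min a (b - (m + l : ℕ))) (max c d)).prod
    (Set.finite_Icc (0 : ℤ) (m + l : ℕ))).image
    (fun t : ℤ × ℤ => cell m l t.1 (t.1 + t.2))).subset fun y hy => ?_
  obtain ⟨s, t, rfl⟩ := exists_cell y
  -- the lift of the cell whose content lies in `[0, κ)`
  have e : cell m l (s + (t - s) / (m + l : ℕ) * m)
      (s + (t - s) / (m + l : ℕ) * m + (t - s) % (m + l : ℕ)) = cell m l s t := by
    refine cell_eq.2 ⟨(t - s) / (m + l : ℕ), rfl, ?_⟩
    have := Int.emod_add_mul_ediv (t - s) (m + l : ℕ)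
    push_cast at this ⊢
    linear_combination this
  have h1 := Int.emod_nonneg (t - s) hK.ne'
  have h2 := Int.emod_lt_of_pos (t - s) hK
  generalize s + (t - s) / (m + l : ℕ) * m = k at e
  generalize (t - s) % (m + l : ℕ) = i at e h1 h2
  rw [← e] at hy ⊢
  refine ⟨(k, i), ⟨⟨?_, ?_⟩, h1, h2.le⟩, rfl⟩
  · by_contra hc
    simp only [min_le_iff, not_or, not_le] at hc
    exact hxξ (hid _ hy _ hx (cle_of_le (by omega) (by omega)))
  · by_contra hc
    simp only [le_max_iff, not_or, not_le] at hc
    exact hz (hθ.2.2 _ (hs hy) _ (cle_of_le (by omega) (by omega)))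

lemma ideal_filt (hF : Filt θ) (hid : ∀ x ∈ ξ, ∀ y ∈ θ, cle m l y x → y ∈ ξ) :
    Filt (θ \ ξ) := fun y hy z hz => ⟨hF y hy.1 z hz, fun h => hy.2 (hid z h y hy.1 hz)⟩

lemma isIdealWord_iff (hκ : 1 < m + l) (hF : Filt θ) (hinf : θ.Infinite)
    {v : Hw (m + l) → Hw (m + l)} :
    IsIdealWord m l θ ξ v ↔ ∃ L, Good θ ξ L ∧ v = wordProd (m + l) L := by
  constructor
  · rintro ⟨⟨hs, -, hid⟩, n, e, hT, rfl⟩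
    refine ⟨_, ?_, rfl⟩
    have := good_of_tableau hκ hT hs (ideal_filt hF hid) n le_rfl
    rwa [hT.2.1] at this
  · rintro ⟨L, g, rfl⟩
    obtain ⟨n, e, hT, rfl⟩ := g.exists_tableau hF
    refine ⟨⟨g.subset, ?_, fun x hx y hy hle => ?_⟩, n, e, hT, rfl⟩
    · rintro rfl
      exact hinf g.finite
    · by_contra hc
      exact (g.filt hF y ⟨hy, hc⟩ x hle).2 hx

lemma good_mem_semiInt (hm : 1 ≤ m) (hl : 1 ≤ l) {e : ℕ → Cyl m l} (hF : Filt θ)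
    (he : IsTableau m l θ e) (g : Good θ ξ L) : wordProd (m + l) L ∈ semiInt m l e := by
  have hκ : 1 < m + l := by omega
  have hpre : ∀ x ∈ ξ, ∃ i, 1 ≤ i ∧ e i = x := by
    intro x hx
    have := g.subset hx
    rw [← he.2.1] at this
    exact this
  choose! f hf using hpre
  obtain ⟨N, hN⟩ := (g.finite.image f).bddAbove
  have hsub : ξ ⊆ e '' Set.Icc 1 (max N 1) := fun x hx =>
    ⟨f x, ⟨(hf x hx).1, (hN ⟨x, hx, rfl⟩).trans (le_max_left _ _)⟩, (hf x hx).2⟩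
  have gn := tableau_good hκ hF he (max N 1)
  obtain ⟨L₁, g₁, w₁⟩ := exists_good hm hl hF g.subset g.finite (g.filt hF)
  obtain ⟨L₂, g₂, w₂⟩ := Good.extend hm hl hF gn.subset gn.finite (gn.filt hF) _ g hsub rfl
  rw [eq_of_invSet hκ L₁ L (by rw [g.invSet hm hl hF, g₁.invSet hm hl hF])] at w₁
  rw [eq_of_invSet hκ L₂ _ ((g₂.invSet hm hl hF).trans (gn.invSet hm hl hF).symm)] at w₂
  exact Set.mem_biUnion (show max N 1 ∈ {n : ℕ | 1 ≤ n} by simp) ⟨w₁, w₂⟩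

/-- Every element whose inversions are hooks of `θ`, finitely many in number, is the element of
an order ideal: by `not_hook` the inverse permutation preserves the order of column edges and the
order of row edges, so that the cells whose hooks are inversions form an ideal. -/
lemma good_of_invSet (hm : 1 ≤ m) (hl : 1 ≤ l) (hθ : IsCylindric m l θ)
    (hsub : invSet (m + l) (wordProd (m + l) L) ⊆ RwTheta m l θ)
    (hfin : (invSet (m + l) (wordProd (m + l) L)).Finite) :
    ∃ ξ L', Good θ ξ L' ∧ wordProd (m + l) L = wordProd (m + l) L' := by
  have hκ : 1 < m + l := by omega
  have hF : Filt θ := hθ.2.2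
  set I := invSet (m + l) (wordProd (m + l) L) with hI
  have mono : ∀ {r s : ℤ}, r ≤ s →
      ((∃ b b', IsCol θ b r ∧ IsCol θ b' s) ∨ (∃ a a', IsRow θ a r ∧ IsRow θ a' s)) →
      perm L.reverse r ≤ perm L.reverse s := by
    intro r s hrs h
    by_cases e : (r : ZMod (m + l)) = s
    · obtain ⟨j, rfl⟩ := (cast_eq_iff _ _).1 e
      rw [perm_period]
      linarith
    · by_contra hc
      have hne : r ≠ s := fun h => e (by rw [h])
      exact not_hook hm hl hθ h (hsub ((rt_mem_invSet hκ L e).2 ⟨by omega, by omega⟩))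
  let ξ : Set (Cyl m l) := {x | x ∈ θ ∧ hk m l θ x ∈ I}
  have hid : ∀ x ∈ ξ, ∀ y ∈ θ, cle m l y x → y ∈ ξ := by
    rintro x ⟨hx, hxI⟩ y hy hle
    refine ⟨hy, ?_⟩
    obtain ⟨a, b, rfl⟩ := exists_cell y
    obtain ⟨c, d, rfl, hc, hd⟩ := cle_lift hle
    obtain ⟨p, hp⟩ := exists_col hl hθ b
    obtain ⟨q, hq⟩ := exists_row hm hθ a
    obtain ⟨p', hp'⟩ := exists_col hl hθ d
    obtain ⟨q', hq'⟩ := exists_row hm hθ c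
    have hpp : p' ≤ p := by
      rcases hd.eq_or_lt with rfl | hd
      · have := (col_mem hF hp' _).1 hp.1
        omega
      · exact (col_le hF hp hp' hd).le
    have hqq : q ≤ q' := by
      rcases hc.eq_or_lt with rfl | hc
      · have := (row_mem hF hq' _).1 hq.1
        omega
      · exact (row_le hF hq' hq hc).le
    rw [hk_cell hm hl hF hp' hq' hx, rt_mem_invSet hκ L (col_row_cast_ne hF hp' hq')] at hxI
    rw [hk_cell hm hl hF hp hq hy, rt_mem_invSet hκ L (col_row_cast_ne hF hp hq)]
    have h1 := mono hpp (Or.inl ⟨_, _, hp', hp⟩)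
    have h2 := mono hqq (Or.inr ⟨_, _, hq, hq'⟩)
    have h3 := (col_mem hF hp a).1 hy
    have h4 := (row_mem hF hq b).1 hy
    exact ⟨by omega, by omega⟩
  have himg : hk m l θ '' ξ = I := by
    refine Set.Subset.antisymm ?_ fun β hβ => ?_
    · rintro _ ⟨x, hx, rfl⟩
      exact hx.2
    · obtain ⟨x, hx, rfl⟩ := hsub hβ
      exact ⟨x, ⟨hx, hβ⟩, rfl⟩
  have hs : ξ ⊆ θ := fun x hx => hx.1
  have hξfin : ξ.Finite := Set.Finite.of_finite_image (by rwa [himg]) ((hk_injOn hm hl hθ).mono hs)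
  obtain ⟨L', g, -⟩ := exists_good hm hl hF hs hξfin (ideal_filt hF hid)
  exact ⟨ξ, L', g, eq_of_invSet hκ _ _ (by rw [g.invSet hm hl hF, himg])⟩

lemma mem_semiInt_iff (hm : 1 ≤ m) (hl : 1 ≤ l) (hθ : IsCylindric m l θ) {e : ℕ → Cyl m l}
    (he : IsTableau m l θ e) {v : Hw (m + l) → Hw (m + l)} :
    v ∈ semiInt m l e ↔ ∃ ξ L, Good θ ξ L ∧ v = wordProd (m + l) L := by
  have hκ : 1 < m + l := by omega
  have hF : Filt θ := hθ.2.2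
  constructor
  · intro hv
    obtain ⟨n, -, h1, h2⟩ := Set.mem_iUnion₂.1 hv
    obtain ⟨⟨L, rfl⟩, -⟩ := wble_invSet hκ ⟨[], rfl⟩ h1
    have hsub := (wble_invSet hκ ⟨L, rfl⟩ h2).2
    have g := tableau_good hκ hF he n
    rw [g.invSet hm hl hF] at hsub
    exact good_of_invSet hm hl hθ (hsub.trans (Set.image_mono g.subset))
      ((g.finite.image _).subset hsub)
  · rintro ⟨ξ, L, g, rfl⟩
    exact good_mem_semiInt hm hl hF he g

/-- Inclusion of ideals corresponds to the weak order. -/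
lemma good_subset_iff (hm : 1 ≤ m) (hl : 1 ≤ l) (hθ : IsCylindric m l θ) {ξ' : Set (Cyl m l)}
    {L' : List (ZMod (m + l))} (g : Good θ ξ L) (g' : Good θ ξ' L') :
    ξ ⊆ ξ' ↔ wble (m + l) (wordProd (m + l) L) (wordProd (m + l) L') := by
  have hκ : 1 < m + l := by omega
  have hF : Filt θ := hθ.2.2
  constructor
  · intro h
    obtain ⟨L₂, g₂, w⟩ := Good.extend hm hl hF g'.subset g'.finite (g'.filt hF) _ g h rfl
    rwa [eq_of_invSet hκ L₂ L' (by rw [g₂.invSet hm hl hF, g'.invSet hm hl hF])] at w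
  · intro h
    have h' := (wble_invSet hκ ⟨L, rfl⟩ h).2
    rw [g.invSet hm hl hF, g'.invSet hm hl hF] at h'
    exact ((hk_injOn hm hl hθ).image_subset_image_iff g.subset g'.subset).1 h'

end Ideals

/-- Theorem 4.7: (1) Φ : (I(θ), ⊆) → ([e,w_θ), ⪯), ξ ↦ w_ξ, is an order
isomorphism; (2) Ψ : ([e,w_θ), ⪯) → (I(R(w_θ)), ⊆), w ↦ R(w), is an order
isomorphism. -/
theorem statement_18 (m l : ℕ) (hm : 1 ≤ m) (hl : 1 ≤ l)
    (θ : Set (Cyl m l)) (hθ : IsCylindric m l θ)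
    (e : ℕ → Cyl m l) (he : IsTableau m l θ e) :
    -- Φ is a well-defined map into [e, w_θ)
    (∀ ξ v v', IsIdealWord m l θ ξ v → IsIdealWord m l θ ξ v' → v = v') ∧
    (∀ ξ v, IsIdealWord m l θ ξ v → v ∈ semiInt m l e) ∧
    -- Φ is injective and surjective
    (∀ ξ ξ' v v', IsIdealWord m l θ ξ v → IsIdealWord m l θ ξ' v' →
        v = v' → ξ = ξ') ∧
    (∀ v ∈ semiInt m l e, ∃ ξ : Set (Cyl m l), IsIdealWord m l θ ξ v) ∧
    -- Φ is an order isomorphism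
    (∀ ξ ξ' v v', IsIdealWord m l θ ξ v → IsIdealWord m l θ ξ' v' →
        (ξ ⊆ ξ' ↔ wble (m + l) v v')) ∧
    -- Ψ maps [e, w_θ) into the proper order ideals of (R(w_θ), ⊴)
    (∀ v ∈ semiInt m l e, IsProperIdealOfRw m l θ (invSet (m + l) v)) ∧
    -- Ψ is injective and surjective
    (∀ v ∈ semiInt m l e, ∀ v' ∈ semiInt m l e,
        invSet (m + l) v = invSet (m + l) v' → v = v') ∧
    (∀ J, IsProperIdealOfRw m l θ J →
        ∃ v ∈ semiInt m l e, invSet (m + l) v = J) ∧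
    -- Ψ is an order isomorphism
    (∀ v ∈ semiInt m l e, ∀ v' ∈ semiInt m l e,
        (wble (m + l) v v' ↔ invSet (m + l) v ⊆ invSet (m + l) v')) := by
  have hκ : 1 < m + l := by omega
  have : NeZero (m + l) := ⟨by omega⟩
  have hF : Filt θ := hθ.2.2
  have hinf := tableau_infinite he
  have hinj := hk_injOn hm hl hθ
  have word : ∀ {ξ v}, IsIdealWord m l θ ξ v ↔ ∃ L, Good θ ξ L ∧ v = wordProd (m + l) L :=
    isIdealWord_iff hκ hF hinf
  have semi : ∀ {v}, v ∈ semiInt m l e ↔ ∃ ξ L, Good θ ξ L ∧ v = wordProd (m + l) L :=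
    mem_semiInt_iff hm hl hθ he
  refine ⟨?_, ?_, ?_, ?_, ?_, ?_, ?_, ?_, ?_⟩
  · intro ξ v v' h h'
    obtain ⟨L, g, rfl⟩ := word.1 h
    obtain ⟨L', g', rfl⟩ := word.1 h'
    exact eq_of_invSet hκ _ _ (by rw [g.invSet hm hl hF, g'.invSet hm hl hF])
  · intro ξ v h
    exact semi.2 ⟨ξ, word.1 h⟩
  · intro ξ ξ' v v' h h' hv
    obtain ⟨L, g, rfl⟩ := word.1 h
    obtain ⟨L', g', rfl⟩ := word.1 h'
    have e := congrArg (invSet (m + l)) hv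
    rw [g.invSet hm hl hF, g'.invSet hm hl hF] at e
    exact (hinj.image_eq_image_iff g.subset g'.subset).1 e
  · intro v hv
    obtain ⟨ξ, h⟩ := semi.1 hv
    exact ⟨ξ, word.2 h⟩
  · intro ξ ξ' v v' h h'
    obtain ⟨L, g, rfl⟩ := word.1 h
    obtain ⟨L', g', rfl⟩ := word.1 h'
    exact good_subset_iff hm hl hθ g g'
  · intro v hv
    obtain ⟨ξ, L, g, rfl⟩ := semi.1 hv
    rw [g.invSet hm hl hF]
    refine ⟨Set.image_mono g.subset, fun h => ?_, ?_⟩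
    · have := (hinj.image_eq_image_iff g.subset subset_rfl).1 h
      rw [← this] at hinf
      exact hinf g.finite
    · rintro _ ⟨x, hx, rfl⟩ _ ⟨y, hy, rfl⟩ hle
      have hc := cle_of_trile hm hl hθ hy (g.subset hx) hle
      refine ⟨y, ?_, rfl⟩
      by_contra hyξ
      exact (g.filt hF y ⟨hy, hyξ⟩ x hc).2 hx
  · intro v hv v' hv' h
    obtain ⟨ξ, L, g, rfl⟩ := semi.1 hv
    obtain ⟨ξ', L', g', rfl⟩ := semi.1 hv'
    exact eq_of_invSet hκ _ _ h
  · rintro J ⟨hJ, hJne, hJid⟩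
    have himg : hk m l θ '' {x | x ∈ θ ∧ hk m l θ x ∈ J} = J := by
      refine Set.Subset.antisymm ?_ fun β hβ => ?_
      · rintro _ ⟨x, hx, rfl⟩
        exact hx.2
      · obtain ⟨x, hx, rfl⟩ := hJ hβ
        exact ⟨x, ⟨hx, hβ⟩, rfl⟩
    have hid : ∀ x ∈ {x | x ∈ θ ∧ hk m l θ x ∈ J}, ∀ y ∈ θ, cle m l y x →
        y ∈ {x | x ∈ θ ∧ hk m l θ x ∈ J} := fun x hx y hy hle =>
      ⟨hy, hJid _ hx.2 _ ⟨y, hy, rfl⟩ (trile_of_cle hm hl hθ hy hx.1 hle)⟩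
    have hsub : {x | x ∈ θ ∧ hk m l θ x ∈ J} ⊆ θ := fun x hx => hx.1
    have hfin := ideal_finite hθ (ξ := {x | x ∈ θ ∧ hk m l θ x ∈ J})
      ⟨hsub, fun h => hJne (by rw [h] at himg; exact himg.symm), hid⟩
    obtain ⟨L, g, -⟩ := exists_good hm hl hF hsub hfin (ideal_filt hF hid)
    exact ⟨_, semi.2 ⟨_, L, g, rfl⟩, by rw [g.invSet hm hl hF, himg]⟩
  · intro v hv v' hv'
    obtain ⟨ξ, L, g, rfl⟩ := semi.1 hv
    obtain ⟨ξ', L', g', rfl⟩ := semi.1 hv'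
    rw [← good_subset_iff hm hl hθ g g', g.invSet hm hl hF, g'.invSet hm hl hF]
    exact (hinj.image_subset_image_iff g.subset g'.subset).symm

end CylPaper
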